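/- arXiv:1601.05622 — 3 statements merged into one kernel-verified Lean document; each statement's English description precedes it below -/
import Mathlib

section
/- Let (R,m) be a Cohen–Macaulay local ring of dimension d with 1≤d≤2 and infinite residue field, and let I, J be m-primary ideals of R. Let F = {F(r,s)}_{(r,s)∈ℤ^2} be a ℤ^2-graded (I,J)-admissible filtration of ideals in R. Then the following are equivalent: (1) e_{(d−1)e_1}(F) = 0 and e_{(d−1)e_2}(F) = 0; (2) I and J are generated by systems of parameters, P_F(r,s) = H_F(r,s) for all (r,s)∈ℕ^2, and F(r,s) = I^r J^s for all (r,s)∈ℤ^2; (3) e_α(F) = 0 for all α∈ℕ^2 with |α| ≤ d−1. -/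
/-! Common definitions for multigraded filtrations of ideals
(following Sarkar–Verma, "Postulation and reduction vectors of
multigraded filtrations of ideals"). -/

open Finset IsLocalRing

/-- The vector `e = (1,…,1) ∈ ℤˢ`. -/
def evec (s : ℕ) : Fin s → ℤ := fun _ => 1

/-- `n⁺`, the componentwise positive part of a vector. -/
def vplus {s : ℕ} (n : Fin s → ℤ) : Fin s → ℤ := fun i => max (n i) 0

/-- `I^n = I₁^{n₁} ⋯ I_s^{n_s}` with the convention `I_i^{n_i} = R` for `n_i ≤ 0`. -/
def prodPow {R : Type*} [CommRing R] {s : ℕ} (I : Fin s → Ideal R) (n : Fin s → ℤ) : Ideal R :=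
  ∏ i, I i ^ (n i).toNat

/-- An ideal is `m`-primary iff it is proper and contains a power of the maximal ideal. -/
def IsMPrimary (R : Type*) [CommRing R] [IsLocalRing R] (I : Ideal R) : Prop :=
  I ≠ ⊤ ∧ maximalIdeal R ≤ I.radical

/-- A Cohen–Macaulay local ring: some system of parameters (a regular sequence of
length equal to the Krull dimension inside the maximal ideal) exists. -/
def IsCMLocal (R : Type*) [CommRing R] [IsLocalRing R] : Prop :=
  ∃ rs : List R, (∀ x ∈ rs, x ∈ maximalIdeal R) ∧ RingTheory.Sequence.IsRegular R rs ∧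
    (rs.length : WithBot ℕ∞) = ringKrullDim R

/-- A `ℤˢ`-graded `I`-admissible filtration of ideals.  Admissibility (finiteness of the
extended Rees ring `R'(F)` as a module over `R'(I)`) is recorded through the equivalent
condition that `F(n + m) = I^n F(m)` for all `n ≥ 0`, for a suitable fixed `m ≥ 0`. -/
structure AdmissibleFiltration (R : Type*) [CommRing R] (s : ℕ) (I : Fin s → Ideal R) where
  F : (Fin s → ℤ) → Ideal R
  prodPow_le : ∀ n, prodPow I n ≤ F n
  mul_le : ∀ m n, F m * F n ≤ F (m + n)
  antitone : ∀ m n : Fin s → ℤ, m ≤ n → F n ≤ F m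
  plus_eq : ∀ n, F n = F (vplus n)
  admissible : ∃ m : Fin s → ℤ, 0 ≤ m ∧
    ∀ n : Fin s → ℤ, 0 ≤ n → F (n + m) = prodPow I n * F m

/-- The length `λ_R(M)` of a module, as an integer (the longest chain of submodules;
this is the usual length for modules of finite length). -/
noncomputable def lenI (R M : Type*) [CommRing R] [AddCommGroup M] [Module R M] : ℤ :=
  (((Order.krullDim (Submodule R M)).unbotD 0).toNat : ℤ)

/-- The Hilbert function `H_F(n) = λ(R/F(n))` of a filtration. -/
noncomputable def hilbFn {R : Type*} [CommRing R] {s : ℕ} {I : Fin s → Ideal R}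
    (F : AdmissibleFiltration R s I) (n : Fin s → ℤ) : ℤ :=
  lenI R (R ⧸ F.F n)

/-- The multigraded Hilbert polynomial with coefficient data `c = (e_α)`:
`P(n) = Σ_{|α| ≤ d} (−1)^{d−|α|} e_α ∏ᵢ binom(nᵢ+αᵢ−1, αᵢ)`. -/
noncomputable def hilbPoly (s d : ℕ) (c : (Fin s → ℕ) → ℤ) (n : Fin s → ℤ) : ℤ :=
  ∑ α ∈ Finset.univ.filter (fun α : Fin s → Fin (d+1) => (∑ i, (α i : ℕ)) ≤ d),
    (-1)^(d - ∑ i, (α i : ℕ)) * c (fun i => (α i : ℕ)) *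
      ∏ i, Ring.choose (n i + ((α i : ℕ) : ℤ) - 1) (α i : ℕ)

/-- `c : (Fin s → ℕ) → ℤ` is the family of Hilbert coefficients of `F`:
the corresponding polynomial agrees with the Hilbert function for all large `n`. -/
noncomputable def IsHilbCoeffs {R : Type*} [CommRing R] {s : ℕ} {I : Fin s → Ideal R}
    (F : AdmissibleFiltration R s I) (d : ℕ) (c : (Fin s → ℕ) → ℤ) : Prop :=
  ∃ N : ℕ, ∀ n : Fin s → ℤ, (∀ i, (N : ℤ) ≤ n i) → hilbPoly s d c n = hilbFn F n

/-- The Samuel polynomial `P_a(n) = Σ_{i=0}^{d} (−1)^i e_i binom(n+d−1−i, d−i)` with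
coefficient data `c = (e_i)`. -/
noncomputable def samuelPoly (d : ℕ) (c : ℕ → ℤ) (n : ℤ) : ℤ :=
  ∑ i ∈ Finset.range (d + 1), (-1)^i * c i * Ring.choose (n + (d : ℤ) - 1 - (i : ℤ)) (d - i)

/-- `c` is the family of Hilbert coefficients of the `m`-primary ideal `a`. -/
noncomputable def IsSamuelCoeffs {R : Type*} [CommRing R] (a : Ideal R) (d : ℕ)
    (c : ℕ → ℤ) : Prop :=
  ∃ N : ℕ, ∀ n : ℕ, N ≤ n → samuelPoly d c (n : ℤ) = lenI R (R ⧸ a ^ n)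

section Reductions

variable {R : Type*} [CommRing R] {s d : ℕ} {I : Fin s → Ideal R}

/-- The ideal `J = (y₁,…,y_d)` of a complete reduction datum, where `y_j = x_{1j}⋯x_{sj}`. -/
def crIdeal (x : Fin s → Fin d → R) : Ideal R :=
  Ideal.span (Set.range fun j => ∏ i, x i j)

/-- `A = {x_{ij} ∈ I_i}` is a complete reduction of `F`: `J·F(n) = F(n+e)` for all large `n`. -/
def IsCompleteReduction (F : AdmissibleFiltration R s I) (x : Fin s → Fin d → R) : Prop :=
  (∀ i j, x i j ∈ I i) ∧
  ∃ N : ℕ, ∀ n : Fin s → ℤ, (∀ i, (N : ℤ) ≤ n i) →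
    crIdeal x * F.F n = F.F (n + evec s)

/-- A good complete reduction: in addition `F(m) ∩ (y₁) = y₁ F(m−e)` for all large `m`. -/
def IsGoodCompleteReduction (F : AdmissibleFiltration R s I) (x : Fin s → Fin d → R) : Prop :=
  IsCompleteReduction F x ∧
  ∀ h : 0 < d, ∃ N : ℕ, ∀ m : Fin s → ℤ, (∀ i, (N : ℤ) ≤ m i) →
    F.F m ⊓ Ideal.span {∏ i, x i ⟨0, h⟩} =
      Ideal.span {∏ i, x i ⟨0, h⟩} * F.F (m - evec s)

end Reductions

/-- The first difference operator `Δ¹ f (n) = f(n+e) − f(n)`; `Δ^k` is its `k`-th iterate. -/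
def deltaOp {s : ℕ} (f : (Fin s → ℤ) → ℤ) : (Fin s → ℤ) → ℤ :=
  fun n => f (n + evec s) - f n

/-- The Ratliff–Rush closure filtration `F̆(n) = ⋃_{k ≥ 1} (F(n+ke) : F(e)^k)`. -/
def ratliffRush {R : Type*} [CommRing R] {s : ℕ} {I : Fin s → Ideal R}
    (F : AdmissibleFiltration R s I) (n : Fin s → ℤ) : Ideal R :=
  ⨆ k : ℕ, (F.F (n + ((k + 1) : ℕ) • evec s)).colon ((F.F (evec s) ^ (k + 1) : Ideal R) : Set R)

/-- Vanishing of `H¹_{R₊₊}(R(F))_n` for all `n ∈ ℕˢ`.  By Proposition 4.1 of the paper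
(see STATEMENT 9), the degree-`n` component of this local cohomology module is isomorphic
to `F̆(n)/F(n)`, so its vanishing for all `n ≥ 0` is the statement that the Ratliff–Rush
closure filtration agrees with `F` in all nonnegative degrees. -/
def H1ReesVanishes {R : Type*} [CommRing R] {s : ℕ} {I : Fin s → Ideal R}
    (F : AdmissibleFiltration R s I) : Prop :=
  ∀ n : Fin s → ℤ, 0 ≤ n → ratliffRush F n = F.F n

universe u

def Pn {R : Type*} [CommRing R] {s : ℕ} (I : Fin s → Ideal R) (n : Fin s →₀ ℕ) : Ideal R :=
  ∏ j, I j ^ (n j)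

lemma Pn_add {R : Type*} [CommRing R] {s : ℕ} (I : Fin s → Ideal R) (m n : Fin s →₀ ℕ) :
    Pn I (m + n) = Pn I m * Pn I n := by
  simp [Pn, pow_add, Finset.prod_mul_distrib]

lemma Pn_zero {R : Type*} [CommRing R] {s : ℕ} (I : Fin s → Ideal R) : Pn I 0 = ⊤ := by
  simp [Pn]

lemma Pn_single {R : Type*} [CommRing R] {s : ℕ} (I : Fin s → Ideal R) (i : Fin s) (k : ℕ) :
    Pn I (Finsupp.single i k) = I i ^ k := by
  unfold Pn
  rw [Finset.prod_eq_single i]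
  · simp
  · intro b _ hb
    simp [hb.symm]
  · simp

lemma Pn_anti {R : Type*} [CommRing R] {s : ℕ} (I : Fin s → Ideal R) {m n : Fin s →₀ ℕ}
    (h : m ≤ n) : Pn I n ≤ Pn I m := by
  obtain ⟨k, rfl⟩ := exists_add_of_le h
  rw [Pn_add]; exact Ideal.mul_le_left

/-- existence of a Noetherian presentation of the multi-Rees algebra -/
lemma exists_rees {R : Type u} [CommRing R] [IsNoetherianRing R] {s : ℕ} (I : Fin s → Ideal R) :
    ∃ (B : Type u) (_ : CommRing B) (_ : IsNoetherianRing B)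
      (φ : B →+* MvPolynomial (Fin s) R),
      (∀ b n, MvPolynomial.coeff n (φ b) ∈ Pn I n) ∧
      (∀ n, ∀ y ∈ Pn I n, ∃ b, φ b = MvPolynomial.monomial n y) := by
  classical
  have hfg : ∀ i, ∃ t : Finset R, Ideal.span (t : Set R) = I i := fun i =>
    (isNoetherianRing_iff_ideal_fg R).1 inferInstance (I i)
  choose t ht using hfg
  let τ := Σ i : Fin s, {x // x ∈ t i}
  let φ : MvPolynomial τ R →ₐ[R] MvPolynomial (Fin s) R :=
    MvPolynomial.aeval (fun p : τ => MvPolynomial.monomial (Finsupp.single p.1 1) (p.2 : R))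
  let A : Subalgebra R (MvPolynomial (Fin s) R) :=
    { carrier := {f | ∀ n, MvPolynomial.coeff n f ∈ Pn I n}
      mul_mem' := by
        intro f g hf hg n
        rw [MvPolynomial.coeff_mul]
        refine Ideal.sum_mem _ fun p hp => ?_
        rw [← Finset.HasAntidiagonal.mem_antidiagonal.1 hp, Pn_add]
        exact Ideal.mul_mem_mul (hf _) (hg _)
      add_mem' := by
        intro f g hf hg n
        rw [MvPolynomial.coeff_add]
        exact Ideal.add_mem _ (hf _) (hg _)
      algebraMap_mem' := by
        intro r n
        rw [MvPolynomial.algebraMap_eq, MvPolynomial.coeff_C]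
        split_ifs with h
        · rw [← h, Pn_zero]; trivial
        · exact Ideal.zero_mem _ }
  refine ⟨MvPolynomial τ R, inferInstance, inferInstance, φ.toRingHom, ?_, ?_⟩
  · intro b
    have : φ.range ≤ A := by
      rw [← Algebra.adjoin_range_eq_range_aeval]
      apply Algebra.adjoin_le
      rintro _ ⟨p, rfl⟩ n
      simp only [MvPolynomial.coeff_monomial]
      split_ifs with h
      · rw [← h, Pn_single, pow_one, ← ht]
        exact Ideal.subset_span p.2.2
      · exact Ideal.zero_mem _
    exact this ⟨b, rfl⟩
  · let K : (Fin s →₀ ℕ) → Ideal R := fun n =>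
      { carrier := {y | ∃ b, φ b = MvPolynomial.monomial n y}
        add_mem' := by
          rintro a b ⟨x, hx⟩ ⟨y, hy⟩
          exact ⟨x + y, by simp [hx, hy]⟩
        zero_mem' := ⟨0, by simp⟩
        smul_mem' := by
          rintro c a ⟨x, hx⟩
          exact ⟨c • x, by simp [hx, MvPolynomial.smul_monomial]⟩ }
    have hKmul : ∀ m n, K m * K n ≤ K (m + n) := by
      intro m n
      rw [Ideal.mul_le]
      rintro a ⟨x, hx⟩ b ⟨y, hy⟩
      exact ⟨x * y, by simp [hx, hy, MvPolynomial.monomial_mul]⟩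
    have hK1 : ∀ i, I i ≤ K (Finsupp.single i 1) := by
      intro i
      rw [← ht i, Ideal.span_le]
      intro x hx
      exact ⟨MvPolynomial.X ⟨i, x, hx⟩, by simp [φ]⟩
    have hK0 : K 0 = ⊤ := by
      rw [Ideal.eq_top_iff_one]
      exact ⟨1, by simp⟩
    have hpow : ∀ i k, I i ^ k ≤ K (Finsupp.single i k) := by
      intro i k
      induction k with
      | zero => simp [hK0]
      | succ k ih =>
        rw [pow_succ, Finsupp.single_add]
        exact (Ideal.mul_mono ih (hK1 i)).trans (hKmul _ _)
    have hprod : ∀ (n : Fin s →₀ ℕ) (S : Finset (Fin s)),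
        ∏ j ∈ S, I j ^ (n j) ≤ K (∑ j ∈ S, Finsupp.single j (n j)) := by
      intro n S
      induction S using Finset.induction_on with
      | empty => simp [hK0]
      | insert a S ha ih =>
        rw [Finset.prod_insert ha, Finset.sum_insert ha]
        exact (Ideal.mul_mono (hpow _ _) ih).trans (hKmul _ _)
    intro n y hy
    have := hprod n Finset.univ hy
    rw [Finsupp.univ_sum_single] at this
    exact this

/-- the constant vector -/
noncomputable def cst (s c : ℕ) : Fin s →₀ ℕ := Finsupp.equivFunOnFinite.symm (fun _ => c)

@[simp] lemma cst_apply (s c : ℕ) (i : Fin s) : cst s c i = c := rfl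

/-- ideal of B attached to a family -/
def famIdeal {R : Type u} [CommRing R] {s : ℕ} {I : Fin s → Ideal R} {B : Type u} [CommRing B]
    (φ : B →+* MvPolynomial (Fin s) R) (h1 : ∀ b n, MvPolynomial.coeff n (φ b) ∈ Pn I n)
    (L : (Fin s →₀ ℕ) → Ideal R) (hL : ∀ m n, Pn I m * L n ≤ L (m + n)) : Ideal B where
  carrier := {b | ∀ n, MvPolynomial.coeff n (φ b) ∈ L n}
  add_mem' := by
    intro a b ha hb n
    rw [map_add, MvPolynomial.coeff_add]
    exact Ideal.add_mem _ (ha n) (hb n)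
  zero_mem' := by intro n; simp
  smul_mem' := by
    intro a b hb n
    rw [smul_eq_mul, map_mul, MvPolynomial.coeff_mul]
    refine Ideal.sum_mem _ fun p hp => ?_
    rw [← Finset.HasAntidiagonal.mem_antidiagonal.1 hp]
    exact hL _ _ (Ideal.mul_mem_mul (h1 _ _) (hb _))

/-- Artin–Rees for families -/
lemma artin_rees {R : Type u} [CommRing R] [IsNoetherianRing R] {s : ℕ} (I : Fin s → Ideal R)
    (L : (Fin s →₀ ℕ) → Ideal R) (hL : ∀ m n, Pn I m * L n ≤ L (m + n))
    (hLI : ∀ n, L n ≤ Pn I n) :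
    ∃ c : ℕ, ∀ n, L (cst s c + n) ≤ Pn I n * L (cst s c) := by
  classical
  obtain ⟨B, _, _, φ, h1, h2⟩ := exists_rees I
  obtain ⟨t, ht⟩ := (isNoetherianRing_iff_ideal_fg B).1 inferInstance (famIdeal φ h1 L hL)
  let c : ℕ := t.sup fun b => (φ b).totalDegree
  refine ⟨c, fun n y hy => ?_⟩
  obtain ⟨b, hb⟩ := h2 _ y (hLI _ hy)
  have hbL : b ∈ famIdeal φ h1 L hL := by
    intro k
    rw [hb, MvPolynomial.coeff_monomial]
    split_ifs with h
    · rw [← h]; exact hy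
    · exact Ideal.zero_mem _
  rw [← ht] at hbL
  obtain ⟨f, hf⟩ := Submodule.mem_span_finset'.1 hbL
  have hy' : y = MvPolynomial.coeff (cst s c + n) (φ b) := by
    rw [hb, MvPolynomial.coeff_monomial, if_pos rfl]
  rw [hy', ← hf, map_sum, MvPolynomial.coeff_sum]
  refine Ideal.sum_mem _ fun g _ => ?_
  rw [smul_eq_mul, map_mul, MvPolynomial.coeff_mul]
  refine Ideal.sum_mem _ fun p hp => ?_
  by_cases h0 : MvPolynomial.coeff p.2 (φ g) = 0
  · rw [h0, mul_zero]; exact Ideal.zero_mem _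
  have hg : (g : B) ∈ famIdeal φ h1 L hL := by
    rw [← ht]; exact Submodule.subset_span g.2
  have hle : p.2 ≤ cst s c := by
    intro j
    have h3 : (φ g).totalDegree ≤ c := Finset.le_sup (f := fun b => (φ b).totalDegree) g.2
    have h4 := MvPolynomial.le_totalDegree (MvPolynomial.mem_support_iff.2 h0)
    have h5 : p.2 j ≤ p.2.sum fun _ e => e := by
      by_cases hj : j ∈ p.2.support
      · exact Finset.single_le_sum (f := fun j => p.2 j) (fun _ _ => Nat.zero_le _) hj
      · simp [Finsupp.notMem_support_iff.1 hj]
    rw [cst_apply]; omega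
  obtain ⟨q, hq⟩ := exists_add_of_le hle
  have hp' := Finset.HasAntidiagonal.mem_antidiagonal.1 hp
  have hp1 : p.1 = n + q := by
    have : p.1 + p.2 = (n + q) + p.2 := by rw [hp', hq]; abel
    exact add_right_cancel this
  have h6 := Ideal.mul_mem_mul (h1 (f g) p.1) (hg p.2)
  rw [hp1, Pn_add, mul_assoc] at h6
  rw [hq, add_comm p.2 q, hp1]
  exact Ideal.mul_mono le_rfl (hL q p.2) h6

lemma avoid {R : Type u} [CommRing R] [IsLocalRing R] [Infinite (IsLocalRing.ResidueField R)]
    (I : Ideal R) {ι : Type*} (S : Finset ι) (W : ι → Ideal R) (h : ∀ k ∈ S, ¬ I ≤ W k) :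
    ∃ x ∈ I, ∀ k ∈ S, x ∉ W k := by
  classical
  by_contra hcon
  push Not at hcon
  have hcov : ⋃ k ∈ S, ((Submodule.comap (Submodule.subtype I) (W k)) : Set I) = Set.univ := by
    rw [Set.eq_univ_iff_forall]
    intro x
    obtain ⟨k, hk, hx⟩ := hcon x x.2
    simp only [Set.mem_iUnion]
    exact ⟨k, hk, hx⟩
  obtain ⟨k, hk, hfin⟩ := Submodule.exists_finiteIndex_of_cover hcov
  obtain ⟨z, hzI, hzW⟩ := Set.not_subset.1 (h k hk)
  set A : AddSubgroup I := (Submodule.comap (Submodule.subtype I) (W k)).toAddSubgroup with hA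
  have : Finite (I ⧸ A) := inferInstance
  have hsurj : ∀ α : ResidueField R, ∃ r, residue R r = α := residue_surjective
  choose l hl using hsurj
  obtain ⟨α, β, hne, heq⟩ := Finite.exists_ne_map_eq_of_infinite
    (fun α : ResidueField R => (QuotientAddGroup.mk (l α • (⟨z, hzI⟩ : I)) : I ⧸ A))
  rw [QuotientAddGroup.eq] at heq
  have h1 : -(l α * z) + l β * z ∈ W k := heq
  have h2 : IsUnit (l β - l α) := by
    by_contra hu
    have h3 : l β - l α ∈ maximalIdeal R := (mem_maximalIdeal _).2 hu
    rw [← residue_eq_zero_iff, map_sub, hl, hl, sub_eq_zero] at h3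
    exact hne h3.symm
  apply hzW
  have h4 : (l β - l α) * z ∈ W k := by
    convert h1 using 1; ring
  exact (Ideal.unit_mul_mem_iff_mem _ h2).1 h4

lemma lasker {R : Type u} [CommRing R] [IsNoetherianRing R] (a : Ideal R) :
    ∃ t : Finset (Ideal R), t.inf id = a ∧ ∀ Q ∈ t, Q.IsPrimary := by
  obtain ⟨t, h1, h2⟩ := Submodule.isLasker R R a
  exact ⟨t, h1, fun Q hQ => h2 hQ⟩

lemma colon_kill {A : Type u} [CommRing A] [IsNoetherianRing A] (a K : Ideal A)
    (t : Finset (Ideal A)) (ht : t.inf id = a) (hp : ∀ Q ∈ t, Q.IsPrimary) (x : A)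
    (hx : ∀ Q ∈ t, x ∈ Q.radical → K ≤ Q.radical) :
    ∃ p : ℕ, ∀ b, x * b ∈ a → ∀ k ∈ K ^ p, k * b ∈ a := by
  classical
  have h1 : ∀ Q ∈ t, ∃ p : ℕ, K ≤ Q.radical → K ^ p ≤ Q := by
    intro Q hQ
    by_cases h : K ≤ Q.radical
    · obtain ⟨n, hn⟩ := Ideal.exists_pow_le_of_le_radical_of_fg h
        ((isNoetherianRing_iff_ideal_fg A).1 inferInstance K)
      exact ⟨n, fun _ => hn⟩
    · exact ⟨0, fun h' => absurd h' h⟩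
  choose! p hp' using h1
  refine ⟨t.sup p, fun b hb k hk => ?_⟩
  rw [← ht, Submodule.mem_finsetInf] at hb ⊢
  intro Q hQ
  have hbQ : x * b ∈ Q := hb Q hQ
  show k * b ∈ Q
  by_cases hxQ : x ∈ Q.radical
  · exact Ideal.mul_mem_right _ _
      (hp' Q hQ (hx Q hQ hxQ) (Ideal.pow_le_pow_right (Finset.le_sup hQ) hk))
  · rw [mul_comm] at hbQ
    rcases (Ideal.isPrimary_iff.1 (hp Q hQ)).2 hbQ with h | h
    · exact Ideal.mul_mem_left _ _ h
    · exact absurd h hxQ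

/-- Key eventual-injectivity statement, for a family `L`. -/
lemma filter_regular {R : Type u} [CommRing R] [IsLocalRing R] [IsNoetherianRing R]
    [Infinite (IsLocalRing.ResidueField R)] {s : ℕ} (I : Fin s → Ideal R) (i : Fin s)
    (h0 : ∀ z : R, (∀ a ∈ I i, a * z = 0) → z = 0)
    (L : (Fin s →₀ ℕ) → Ideal R) (hL : ∀ m n, Pn I m * L n ≤ L (m + n)) :
    ∃ x ∈ I i, (∀ z, x * z = 0 → z = 0) ∧ ∃ c : ℕ, ∀ n, cst s c ≤ n → ∀ y ∈ Pn I n,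
      x * y ∈ L (n + Finsupp.single i 1) → y ∈ L n := by
  classical
  obtain ⟨B, _, _, φ, h1, h2⟩ := exists_rees I
  let e : Fin s →₀ ℕ := Finsupp.single i 1
  set 𝔏 := famIdeal φ h1 L hL with h𝔏
  obtain ⟨t, ht, htp⟩ := lasker 𝔏
  obtain ⟨t', ht', htp'⟩ := lasker (⊥ : Ideal R)
  have hker : ∀ Q ∈ t, ∀ b, φ b = 0 → b ∈ Q := by
    intro Q hQ b hb
    have : b ∈ 𝔏 := by intro n; rw [hb]; simp
    rw [← ht, Submodule.mem_finsetInf] at this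
    exact this Q hQ
  let W : Ideal B → Ideal R := fun Q =>
    { carrier := {x | ∃ b ∈ Q.radical, φ b = MvPolynomial.monomial e x}
      add_mem' := by
        rintro x y ⟨b, hb, hb'⟩ ⟨d, hd, hd'⟩
        exact ⟨b + d, Ideal.add_mem _ hb hd, by simp [hb', hd']⟩
      zero_mem' := ⟨0, Ideal.zero_mem _, by simp⟩
      smul_mem' := by
        rintro r x ⟨b, hb, hb'⟩
        obtain ⟨d, hd⟩ := h2 0 r (by rw [Pn_zero]; trivial)
        exact ⟨d * b, Ideal.mul_mem_left _ _ hb, by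
          rw [map_mul, hd, hb', MvPolynomial.monomial_mul, zero_add]; rfl⟩ }
  obtain ⟨x, hxI, hxW⟩ := avoid (I i)
    (((t.image W) ∪ (t'.image Ideal.radical)).filter (fun V => ¬ I i ≤ V)) id (by
      intro k hk
      exact (Finset.mem_filter.1 hk).2)
  have hx1 : ∀ Q ∈ t, x ∈ W Q → I i ≤ W Q := by
    intro Q hQ hx
    by_contra hcon
    exact hxW (W Q) (Finset.mem_filter.2
      ⟨Finset.mem_union_left _ (Finset.mem_image_of_mem _ hQ), hcon⟩) hx
  have hx2 : ∀ Q ∈ t', x ∈ Q.radical → I i ≤ Q.radical := by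
    intro Q hQ hx
    by_contra hcon
    exact hxW Q.radical (Finset.mem_filter.2
      ⟨Finset.mem_union_right _ (Finset.mem_image_of_mem _ hQ), hcon⟩) hx
  have hnzd : ∀ z, x * z = 0 → z = 0 := by
    obtain ⟨p, hp⟩ := colon_kill ⊥ (I i) t' ht' htp' x hx2
    intro z hz
    have hz' : ∀ k ∈ I i ^ p, k * z = 0 := by
      intro k hk
      exact hp z hz k hk
    clear hp hz
    induction p generalizing z with
    | zero => simpa using hz' 1 (by simp)
    | succ p ih =>
      apply h0
      intro a ha
      apply ih
      intro k hk
      rw [← mul_assoc]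
      exact hz' _ (by rw [pow_succ]; exact Ideal.mul_mem_mul hk ha)
  have he : Pn I e = I i := by rw [Pn_single, pow_one]
  obtain ⟨bx, hbx⟩ := h2 e x (by rw [he]; exact hxI)
  let K : Ideal B := Ideal.span {b | ∃ a ∈ I i, φ b = MvPolynomial.monomial e a}
  have hK : ∀ Q ∈ t, bx ∈ Q.radical → K ≤ Q.radical := by
    intro Q hQ hb
    have h3 := hx1 Q hQ ⟨bx, hb, hbx⟩
    rw [Ideal.span_le]
    rintro b ⟨a, ha, hb'⟩
    obtain ⟨d, hd, hd'⟩ := h3 ha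
    have h4 : b - d ∈ Q.radical := Ideal.le_radical (hker Q hQ _ (by rw [map_sub, hb', hd', sub_self]))
    have := Ideal.add_mem _ h4 hd
    simpa using this
  obtain ⟨p, hp⟩ := colon_kill 𝔏 K t ht htp bx hK
  have hKp : ∀ p : ℕ, ∀ w ∈ I i ^ p, ∃ k ∈ K ^ p,
      φ k = MvPolynomial.monomial (Finsupp.single i p) w := by
    intro p
    induction p with
    | zero =>
      intro w _
      obtain ⟨d, hd⟩ := h2 0 w (by rw [Pn_zero]; trivial)
      exact ⟨d, by simp, by simpa using hd⟩
    | succ p ih =>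
      intro w hw
      rw [pow_succ] at hw
      refine Submodule.mul_induction_on hw ?_ ?_
      · intro m hm n hn
        obtain ⟨k, hk, hk'⟩ := ih m hm
        obtain ⟨d, hd⟩ := h2 e n (by rw [he]; exact hn)
        refine ⟨k * d, ?_, ?_⟩
        · rw [pow_succ]
          exact Ideal.mul_mem_mul hk (Ideal.subset_span ⟨n, hn, hd⟩)
        · rw [map_mul, hk', hd, MvPolynomial.monomial_mul, Finsupp.single_add]
      · rintro a b ⟨k, hk, hk'⟩ ⟨l, hl, hl'⟩
        exact ⟨k + l, Ideal.add_mem _ hk hl, by simp [hk', hl']⟩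
  -- the family Z
  let Z : (Fin s →₀ ℕ) → Ideal R := fun n =>
    { carrier := {y | y ∈ Pn I n ∧ x * y ∈ L (n + e)}
      add_mem' := by
        rintro a b ⟨ha, ha'⟩ ⟨hb, hb'⟩
        exact ⟨Ideal.add_mem _ ha hb, by rw [mul_add]; exact Ideal.add_mem _ ha' hb'⟩
      zero_mem' := by simp
      smul_mem' := by
        rintro r a ⟨ha, ha'⟩
        exact ⟨Ideal.mul_mem_left _ _ ha, by
          rw [smul_eq_mul, mul_left_comm]; exact Ideal.mul_mem_left _ _ ha'⟩ }
  obtain ⟨c, hc⟩ := artin_rees I Z (by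
    intro m n
    rw [Ideal.mul_le]
    rintro a ha b ⟨hb, hb'⟩
    refine ⟨by rw [Pn_add]; exact Ideal.mul_mem_mul ha hb, ?_⟩
    rw [mul_left_comm, add_assoc]
    exact hL _ _ (Ideal.mul_mem_mul ha hb')) (fun n y hy => hy.1)
  have hkey : I i ^ p * Z (cst s c) ≤ L (Finsupp.single i p + cst s c) := by
    rw [Ideal.mul_le]
    rintro w hw y ⟨hy, hy'⟩
    obtain ⟨b, hb⟩ := h2 _ y hy
    obtain ⟨k, hk, hk'⟩ := hKp p w hw
    have h3 : bx * b ∈ 𝔏 := by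
      intro n
      rw [map_mul, hbx, hb, MvPolynomial.monomial_mul, MvPolynomial.coeff_monomial]
      split_ifs with h
      · rw [← h, add_comm]; exact hy'
      · exact Ideal.zero_mem _
    have h4 := hp b h3 k hk (Finsupp.single i p + cst s c)
    rw [map_mul, hk', hb, MvPolynomial.monomial_mul, MvPolynomial.coeff_monomial, if_pos rfl] at h4
    exact h4
  refine ⟨x, hxI, hnzd, c + p, fun n hn y hy hxy => ?_⟩
  have hle : cst s c + Finsupp.single i p ≤ n := by
    intro j
    have := hn j
    have h5 : (Finsupp.single i p : Fin s →₀ ℕ) j ≤ p := by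
      rw [Finsupp.single_apply]; split_ifs <;> omega
    rw [cst_apply] at this
    rw [Finsupp.add_apply, cst_apply]
    omega
  obtain ⟨q, rfl⟩ := exists_add_of_le hle
  have h6 : y ∈ Z (cst s c + (Finsupp.single i p + q)) := by
    rw [← add_assoc]; exact ⟨hy, hxy⟩
  have h7 := hc _ h6
  rw [add_comm _ q, Pn_add, Pn_single, mul_assoc] at h7
  have h8 := hL _ _ (Ideal.mul_mono le_rfl hkey h7)
  convert h8 using 2
  abel

def vecZ {s : ℕ} (k : Fin s →₀ ℕ) : Fin s → ℤ := fun j => (k j : ℤ)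

lemma prodPow_vecZ {R : Type*} [CommRing R] {s : ℕ} (I : Fin s → Ideal R) (k : Fin s →₀ ℕ) :
    prodPow I (vecZ k) = Pn I k := by
  simp [prodPow, Pn, vecZ]

lemma exists_vecZ {s : ℕ} (n : Fin s → ℤ) (h : 0 ≤ n) : ∃ k : Fin s →₀ ℕ, n = vecZ k :=
  ⟨Finsupp.equivFunOnFinite.symm fun j => (n j).toNat, by
    funext j
    have := h j
    simp only [Pi.zero_apply] at this
    simp [vecZ, this]⟩

lemma superficial {R : Type u} [CommRing R] [IsLocalRing R] [IsNoetherianRing R]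
    [Infinite (IsLocalRing.ResidueField R)] {s : ℕ} {I : Fin s → Ideal R} (i : Fin s)
    (h0 : ∀ z : R, (∀ a ∈ I i, a * z = 0) → z = 0) (F : AdmissibleFiltration R s I) :
    ∃ x ∈ I i, (∀ z, x * z = 0 → z = 0) ∧ ∃ N : ℕ, ∀ n : Fin s → ℤ, (∀ j, (N : ℤ) ≤ n j) →
      ∀ y, x * y ∈ F.F (n + Pi.single i 1) → y ∈ F.F n := by
  classical
  obtain ⟨m0, hm0, hadm⟩ := F.admissible
  obtain ⟨x, hxI, hnzd, c, hc⟩ := filter_regular I i h0 (fun k => F.F (m0 + vecZ k + evec s)) (by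
    intro m n
    rw [← prodPow_vecZ]
    refine (Ideal.mul_mono (F.prodPow_le _) le_rfl).trans ((F.mul_le _ _).trans ?_)
    apply le_of_eq
    congr 1
    funext j
    simp [vecZ]; ring)
  obtain ⟨c', hc'⟩ := artin_rees I (fun k => Pn I k ⊓ Ideal.span {x}) (by
    intro m n
    rw [Ideal.mul_le]
    rintro a ha b ⟨hb, hb'⟩
    refine ⟨?_, Ideal.mul_mem_left _ _ hb'⟩
    rw [Pn_add]
    exact Ideal.mul_mem_mul ha hb) (fun n => inf_le_left)
  have hM : ∃ M : ℕ, ∀ j, m0 j ≤ M := by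
    refine ⟨∑ j, (m0 j).toNat, fun j => ?_⟩
    have : (m0 j).toNat ≤ ∑ j, (m0 j).toNat :=
      Finset.single_le_sum (f := fun j => (m0 j).toNat) (fun _ _ => Nat.zero_le _)
        (Finset.mem_univ j)
    have h3 := hm0 j
    simp only [Pi.zero_apply] at h3
    omega
  obtain ⟨M, hM⟩ := hM
  have hFle : ∀ k, F.F (m0 + vecZ k) ≤ Pn I k := by
    intro k
    rw [add_comm, hadm _ (fun j => by simp [vecZ]), prodPow_vecZ]
    exact Ideal.mul_le_left
  refine ⟨x, hxI, hnzd, M + c + c' + M, fun n hn y hy => ?_⟩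
  have hind : ∀ a : ℕ, a ≤ c' + M → y ∈ F.F (fun j => n j - (c' + M : ℕ) + a) := by
    intro a
    induction a with
    | zero =>
      intro _
      obtain ⟨k, hk⟩ := exists_vecZ (fun j => n j - m0 j) (fun j => by
        have := hn j; have := hM j; simp only [Pi.zero_apply]; push_cast at *; omega)
      have hk' : ∀ j, n j - m0 j = k j := fun j => congrFun hk j
      have h1 : x * y ∈ Pn I (k + Finsupp.single i 1) := by
        apply hFle
        convert hy using 2
        funext j
        have := hk' j
        simp only [Pi.add_apply, vecZ, Finsupp.add_apply, Finsupp.single_apply, Pi.single_apply]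
        push_cast
        split_ifs with h h' h' <;> first | omega | (exact absurd h.symm h') | (exact absurd h'.symm h)
      have hle : cst s c' ≤ k + Finsupp.single i 1 := by
        intro j
        have := hk' j; have := hn j; have := hM j
        rw [cst_apply, Finsupp.add_apply]
        push_cast at *; omega
      obtain ⟨q, hq⟩ := exists_add_of_le hle
      have h2 : x * y ∈ Pn I (k + Finsupp.single i 1) ⊓ Ideal.span {x} :=
        ⟨h1, Ideal.mul_mem_right _ _ (Ideal.mem_span_singleton_self x)⟩
      rw [hq] at h2
      have h3 := Ideal.mul_mono (le_refl (Pn I q)) inf_le_right (hc' q h2)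
      rw [Ideal.mem_mul_span_singleton] at h3
      obtain ⟨w, hw, hwx⟩ := h3
      have h4 : y = w := by
        have : x * (y - w) = 0 := by rw [mul_sub, ← hwx]; ring
        exact sub_eq_zero.1 (hnzd _ this)
      rw [h4]
      rw [← prodPow_vecZ] at hw
      refine F.antitone _ _ ?_ (F.prodPow_le _ hw)
      intro j
      have h5 := congrArg (fun f => f j) hq
      have := hk' j; have := hM j
      simp only [Finsupp.add_apply, cst_apply] at h5
      simp only [vecZ]
      push_cast
      omega
    | succ a ih =>
      intro ha
      have h1 := ih (by omega)
      obtain ⟨k, hk⟩ := exists_vecZ (fun j => n j - (c' + M : ℕ) + a - m0 j) (fun j => by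
        have := hn j; have := hM j; simp only [Pi.zero_apply]; push_cast at *; omega)
      have hk' : ∀ j, n j - (c' + M : ℕ) + a - m0 j = k j := fun j => congrFun hk j
      have h2 : y ∈ Pn I k := by
        apply hFle
        convert h1 using 2
        funext j
        have := hk' j
        simp only [Pi.add_apply, vecZ]; omega
      have h3 := hc k (fun j => by
        have := hk' j; have := hn j; have := hM j
        rw [cst_apply]; push_cast at *; omega) y h2 (by
          refine F.antitone _ _ ?_ hy
          intro j
          have := hk' j
          simp only [Pi.add_apply, vecZ, evec, Finsupp.add_apply, Finsupp.single_apply,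
            Pi.single_apply]
          push_cast
          split_ifs with h h' h' <;>
            first | omega | (exact absurd h.symm h') | (exact absurd h'.symm h))
      convert h3 using 2
      funext j
      have := hk' j
      simp only [Pi.add_apply, vecZ, evec]
      push_cast at *; omega
  have := hind (c' + M) le_rfl
  convert this using 2
  funext j
  ring

noncomputable def ell {R : Type u} [CommRing R] (K : Ideal R) : ℕ∞ := Module.length R (R ⧸ K)

lemma lenI_eq {R : Type u} [CommRing R] (K : Ideal R) : lenI R (R ⧸ K) = ((ell K).toNat : ℤ) := by
  unfold lenI ell
  rw [← Module.coe_length]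
  rfl

lemma ell_split {R : Type u} [CommRing R] (K K' : Ideal R) (x : R)
    (h : ∀ y, y ∈ K' ↔ x * y ∈ K) : ell K = ell K' + ell (K ⊔ Ideal.span {x}) := by
  unfold ell
  let f : (R ⧸ K') →ₗ[R] (R ⧸ K) := Submodule.mapQ K' K (LinearMap.mulLeft R x)
    (fun y hy => (h y).1 hy)
  let g : (R ⧸ K) →ₗ[R] (R ⧸ (K ⊔ Ideal.span {x})) := Submodule.mapQ _ _ LinearMap.id
    (fun y hy => (le_sup_left : K ≤ K ⊔ Ideal.span {x}) hy)
  refine Module.length_eq_add_of_exact f g ?_ ?_ ?_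
  · rw [← LinearMap.ker_eq_bot, LinearMap.ker_eq_bot']
    intro m hm
    obtain ⟨y, rfl⟩ := Submodule.Quotient.mk_surjective _ m
    have hm' : (Submodule.Quotient.mk (x * y) : R ⧸ K) = 0 := hm
    rw [Submodule.Quotient.mk_eq_zero] at hm' ⊢
    exact (h y).2 hm'
  · intro m
    obtain ⟨y, rfl⟩ := Submodule.Quotient.mk_surjective _ m
    exact ⟨Submodule.Quotient.mk y, rfl⟩
  · intro m
    obtain ⟨y, rfl⟩ := Submodule.Quotient.mk_surjective _ m
    constructor
    · intro hy
      have hy' : y ∈ K ⊔ Ideal.span {x} := by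
        rw [← Submodule.Quotient.mk_eq_zero (K ⊔ Ideal.span {x})]; exact hy
      obtain ⟨a, ha, b, hb, rfl⟩ := Submodule.mem_sup.1 hy'
      obtain ⟨c, rfl⟩ := Ideal.mem_span_singleton'.1 hb
      refine ⟨Submodule.Quotient.mk c, ?_⟩
      show (Submodule.Quotient.mk (x * c) : R ⧸ K) = Submodule.Quotient.mk (a + c * x)
      rw [Submodule.Quotient.eq]
      have : x * c - (a + c * x) = -a := by ring
      rw [this]; exact K.neg_mem ha
    · rintro ⟨m, hm⟩
      obtain ⟨z, rfl⟩ := Submodule.Quotient.mk_surjective _ m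
      rw [← hm]
      show (Submodule.Quotient.mk (x * z) : R ⧸ (K ⊔ Ideal.span {x})) = 0
      rw [Submodule.Quotient.mk_eq_zero]
      exact Ideal.mem_sup_right (Ideal.mul_mem_right _ _ (Ideal.mem_span_singleton_self x))

lemma ell_anti {R : Type u} [CommRing R] {K K' : Ideal R} (h : K ≤ K') : ell K' ≤ ell K := by
  unfold ell
  rw [Module.length_quotient, Module.length_quotient]
  exact Order.coheight_anti h

lemma ell_eq {R : Type u} [CommRing R] {K K' : Ideal R} (h : K ≤ K') (hf : ell K' ≠ ⊤)
    (he : ell K = ell K') : K = K' := by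
  by_contra hne
  unfold ell at *
  rw [Module.length_quotient] at *
  rw [Module.length_quotient] at *
  have := Order.coheight_strictAnti (lt_of_le_of_ne h hne) (lt_top_iff_ne_top.2 hf)
  exact absurd he this.ne'

lemma ell_top {R : Type u} [CommRing R] : ell (⊤ : Ideal R) = 0 := by
  unfold ell
  rw [Module.length_quotient]; simp

lemma ell_fin {R : Type u} [CommRing R] [IsLocalRing R] [IsNoetherianRing R] {K : Ideal R} (k : ℕ)
    (h : maximalIdeal R ^ k ≤ K) : ell K ≠ ⊤ := by
  by_cases hK : K = ⊤
  · rw [hK, ell_top]; simp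
  have : Nontrivial (R ⧸ K) := Ideal.Quotient.nontrivial_iff.2 hK
  have : IsLocalRing (R ⧸ K) := IsLocalRing.of_surjective' (Ideal.Quotient.mk K)
    Ideal.Quotient.mk_surjective
  have hA : IsArtinianRing (R ⧸ K) := by
    rw [isArtinianRing_iff_isNilpotent_maximalIdeal]
    refine ⟨k, ?_⟩
    have h1 : maximalIdeal (R ⧸ K) = (maximalIdeal R).map (Ideal.Quotient.mk K) := by
      have := IsLocalRing.map_maximalIdeal_of_surjective (Ideal.Quotient.mk K) Ideal.Quotient.mk_surjective
      exact this.symm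
    rw [h1, ← Ideal.map_pow]
    rw [Ideal.zero_eq_bot, Ideal.map_eq_bot_iff_le_ker, Ideal.mk_ker]
    exact h
  unfold ell
  rw [Module.length_eq_of_surjective (R := R ⧸ K) (S := R) (M := R ⧸ K) Ideal.Quotient.mk_surjective]
  exact Module.length_ne_top

lemma ell_quot {R : Type u} [CommRing R] (x : R) (K : Ideal R) :
    ell (K.map (Ideal.Quotient.mk (Ideal.span {x}))) = ell (K ⊔ Ideal.span {x}) := by
  unfold ell
  rw [← Module.length_eq_of_surjective (R := R ⧸ Ideal.span {x}) (S := R)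
    Ideal.Quotient.mk_surjective]
  have e := (DoubleQuot.quotQuotEquivQuotSupₐ R (Ideal.span {x}) K).toLinearEquiv
  rw [sup_comm]
  exact e.length_eq

/-- if `x` is a nonzerodivisor then `ℓ(R/xK) = ℓ(R/K) + ℓ(R/x)` -/
lemma ell_mul {R : Type u} [CommRing R] (x : R) (hx : ∀ z, x * z = 0 → z = 0) (K : Ideal R) :
    ell (Ideal.span {x} * K) = ell K + ell (Ideal.span {x}) := by
  rw [ell_split (Ideal.span {x} * K) K x, sup_eq_right.2 Ideal.mul_le_left]
  intro y
  rw [Ideal.mem_span_singleton_mul]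
  constructor
  · intro hy; exact ⟨y, hy, rfl⟩
  · rintro ⟨z, hz, h⟩
    have : x * (z - y) = 0 := by rw [mul_sub, h, sub_self]
    rw [← sub_eq_zero.1 (hx _ this)]; exact hz

/-- the filtration restricted to natural number exponents -/
def gF {R : Type u} [CommRing R] {s : ℕ} {I : Fin s → Ideal R} (F : AdmissibleFiltration R s I)
    (n : Fin s → ℕ) : Ideal R := F.F (fun j => (n j : ℤ))

section G
variable {R : Type u} [CommRing R] {s : ℕ} {I : Fin s → Ideal R} (F : AdmissibleFiltration R s I)

lemma gF_prod (n : Fin s → ℕ) : ∏ j, I j ^ n j ≤ gF F n := by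
  have := F.prodPow_le (fun j => (n j : ℤ))
  simpa [prodPow, gF] using this

lemma gF_mul (m n : Fin s → ℕ) : gF F m * gF F n ≤ gF F (m + n) := by
  refine (F.mul_le _ _).trans (le_of_eq ?_)
  unfold gF
  congr 1

lemma gF_anti {m n : Fin s → ℕ} (h : m ≤ n) : gF F n ≤ gF F m :=
  F.antitone _ _ (fun j => by simpa using h j)

lemma gF_zero : gF F 0 = ⊤ := by
  have := gF_prod F 0
  rw [eq_top_iff]
  refine le_trans ?_ this
  simp [← Ideal.one_eq_top]

lemma gF_single (i : Fin s) : I i ≤ gF F (Pi.single i 1) := by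
  classical
  have := gF_prod F (Pi.single i 1)
  refine le_trans (le_of_eq ?_) this
  rw [Finset.prod_eq_single i]
  · simp
  · intro j _ hj; simp [Pi.single_apply, hj]
  · simp

lemma gF_bound : ∃ m : ℕ, ∀ n : Fin s → ℕ, gF F (n + fun _ => m) ≤ ∏ j, I j ^ n j := by
  obtain ⟨m0, hm0, h⟩ := F.admissible
  refine ⟨∑ j, (m0 j).toNat, fun n => ?_⟩
  have h1 := h (fun j => (n j : ℤ)) (fun j => by simp)
  have h2 : F.F ((fun j => (n j : ℤ)) + m0) ≤ ∏ j, I j ^ n j := by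
    rw [h1]
    refine Ideal.mul_le_left.trans (le_of_eq ?_)
    simp [prodPow]
  refine le_trans (F.antitone _ _ ?_) h2
  intro j
  have : (m0 j).toNat ≤ ∑ j, (m0 j).toNat :=
      Finset.single_le_sum (f := fun j => (m0 j).toNat) (fun _ _ => Nat.zero_le _)
        (Finset.mem_univ j)
  simp only [Pi.add_apply]
  omega

lemma gF_mem_single {i : Fin s} {x : R} (hx : x ∈ I i) {n : Fin s → ℕ} {y : R} (hy : y ∈ gF F n) :
    x * y ∈ gF F (n + Pi.single i 1) := by
  rw [add_comm]
  exact gF_mul F _ _ (Ideal.mul_mem_mul (gF_single F i hx) hy)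

lemma superficial' [IsLocalRing R] [IsNoetherianRing R]
    [Infinite (IsLocalRing.ResidueField R)] (i : Fin s)
    (h0 : ∀ z : R, (∀ a ∈ I i, a * z = 0) → z = 0) :
    ∃ x ∈ I i, (∀ z, x * z = 0 → z = 0) ∧ ∃ N : ℕ, ∀ n : Fin s → ℕ, (∀ j, N ≤ n j) →
      ∀ y, x * y ∈ gF F (n + Pi.single i 1) → y ∈ gF F n := by
  obtain ⟨x, hx, h1, N, hN⟩ := superficial i h0 F
  refine ⟨x, hx, h1, N, fun n hn y hy => hN (fun j => (n j : ℤ)) (fun j => by exact_mod_cast hn j) y ?_⟩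
  unfold gF at hy
  convert hy using 2
  funext j
  by_cases h : j = i
  · subst h; simp
  · simp [h]

lemma gF_fin [IsLocalRing R] [IsNoetherianRing R] (hk : ∃ k, ∀ j, maximalIdeal R ^ k ≤ I j)
    (n : Fin s → ℕ) : ell (gF F n) ≠ ⊤ := by
  obtain ⟨k, hk⟩ := hk
  apply ell_fin (∑ j, k * n j)
  rw [← Finset.prod_pow_eq_pow_sum]
  refine le_trans ?_ (gF_prod F n)
  apply Finset.prod_le_prod'
  intro j _
  rw [pow_mul]
  exact Ideal.pow_right_mono (hk j) _

end G

def xp {R : Type u} [CommRing R] {s : ℕ} (x : Fin s → R) (n : Fin s → ℕ) : R := ∏ j, x j ^ n j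

lemma xp_add {R : Type u} [CommRing R] {s : ℕ} (x : Fin s → R) (m n : Fin s → ℕ) :
    xp x (m + n) = xp x m * xp x n := by
  simp [xp, pow_add, Finset.prod_mul_distrib]

lemma xp_mem {R : Type u} [CommRing R] {s : ℕ} {I : Fin s → Ideal R} {x : Fin s → R}
    (hx : ∀ j, x j ∈ I j) (n : Fin s → ℕ) : xp x n ∈ ∏ j, I j ^ n j :=
  Ideal.prod_mem_prod fun j _ => Ideal.pow_mem_pow (hx j) _

lemma xp_nzd {R : Type u} [CommRing R] {s : ℕ} {x : Fin s → R}
    (hx : ∀ j z, x j * z = 0 → z = 0) (n : Fin s → ℕ) : ∀ z, xp x n * z = 0 → z = 0 := by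
  have h1 : ∀ j, ∀ k : ℕ, ∀ z, x j ^ k * z = 0 → z = 0 := by
    intro j k
    induction k with
    | zero => intro z hz; simpa using hz
    | succ k ih => intro z hz; rw [pow_succ, mul_assoc] at hz; exact hx j _ (ih _ hz)
  unfold xp
  induction (Finset.univ : Finset (Fin s)) using Finset.cons_induction with
  | empty => intro z hz; simpa using hz
  | cons a t ha ih =>
    intro z hz; rw [Finset.prod_cons, mul_assoc] at hz; exact ih _ (h1 _ _ _ hz)

lemma ell_mul' {R : Type u} [CommRing R] (x y : R) (hx : ∀ z, x * z = 0 → z = 0) :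
    ell (Ideal.span {x * y}) = ell (Ideal.span {x}) + ell (Ideal.span {y}) := by
  rw [← Ideal.span_singleton_mul_span_singleton, ell_mul x hx, add_comm]

lemma ell_xp {R : Type u} [CommRing R] {s : ℕ} {x : Fin s → R}
    (hx : ∀ j z, x j * z = 0 → z = 0) (n : Fin s → ℕ) :
    ell (Ideal.span {xp x n}) = ∑ j, n j • ell (Ideal.span {x j}) := by
  have h1 : ∀ j, ∀ k : ℕ, (∀ z, x j ^ k * z = 0 → z = 0) := by
    intro j k
    induction k with
    | zero => intro z hz; simpa using hz
    | succ k ih => intro z hz; rw [pow_succ, mul_assoc] at hz; exact hx j _ (ih _ hz)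
  have h2 : ∀ j, ∀ k : ℕ, ell (Ideal.span {x j ^ k}) = k • ell (Ideal.span {x j}) := by
    intro j k
    induction k with
    | zero => simp [ell_top]
    | succ k ih => rw [pow_succ, ell_mul' _ _ (h1 j k), ih, succ_nsmul]
  unfold xp
  induction (Finset.univ : Finset (Fin s)) using Finset.cons_induction with
  | empty => simp [ell_top]
  | cons a t ha ih => rw [Finset.prod_cons, Finset.sum_cons, ell_mul' _ _ (h1 _ _), ih, h2]

lemma krull_sup {R : Type u} [CommRing R] [IsLocalRing R] [IsNoetherianRing R] (x y : R)
    (h : ∀ t : ℕ, y ∈ maximalIdeal R ^ t ⊔ Ideal.span {x}) : y ∈ Ideal.span {x} := by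
  have hk := Ideal.iInf_pow_smul_eq_bot_of_isLocalRing (M := R ⧸ Ideal.span {x}) (maximalIdeal R)
    (IsLocalRing.maximalIdeal.isMaximal R).ne_top
  have : (Submodule.Quotient.mk y : R ⧸ Ideal.span {x}) ∈
      (⨅ i : ℕ, maximalIdeal R ^ i • (⊤ : Submodule R (R ⧸ Ideal.span {x}))) := by
    rw [Submodule.mem_iInf]
    intro t
    obtain ⟨u, hu, v, hv, rfl⟩ := Submodule.mem_sup.1 (h t)
    have : (Submodule.Quotient.mk (u + v) : R ⧸ Ideal.span {x}) =
        u • (Submodule.Quotient.mk 1 : R ⧸ Ideal.span {x}) := by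
      rw [← Submodule.Quotient.mk_smul, Submodule.Quotient.eq]
      simpa using hv
    rw [this]
    exact Submodule.smul_mem_smul hu trivial
  rw [hk, Submodule.mem_bot, Submodule.Quotient.mk_eq_zero] at this
  exact this

lemma ann_I {R : Type u} [CommRing R] [IsLocalRing R] {K : Ideal R} (k : ℕ)
    (hk : maximalIdeal R ^ k ≤ K) (h0 : ∀ z : R, (∀ a ∈ maximalIdeal R, a * z = 0) → z = 0) :
    ∀ z : R, (∀ a ∈ K, a * z = 0) → z = 0 := by
  have : ∀ k : ℕ, ∀ z : R, (∀ a ∈ maximalIdeal R ^ k, a * z = 0) → z = 0 := by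
    intro k
    induction k with
    | zero => intro z hz; simpa using hz 1 (by simp)
    | succ k ih =>
      intro z hz
      apply h0
      intro a ha
      apply ih
      intro b hb
      rw [← mul_assoc]
      apply hz
      rw [pow_succ]
      exact Ideal.mul_mem_mul hb ha
  intro z hz
  exact this k z (fun a ha => hz a (hk ha))

lemma dim1 {R : Type u} [CommRing R] [IsLocalRing R] [IsNoetherianRing R]
    [Infinite (IsLocalRing.ResidueField R)] {s : ℕ} {I : Fin s → Ideal R}
    (hm : ∀ j, I j ≤ maximalIdeal R) (hk : ∃ k, ∀ j, maximalIdeal R ^ k ≤ I j)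
    (h0 : ∀ z : R, (∀ a ∈ maximalIdeal R, a * z = 0) → z = 0)
    (F : AdmissibleFiltration R s I) (a : Fin s → ℤ) (e : ℤ) (N : ℕ)
    (hH : ∀ n : Fin s → ℕ, (∀ j, N ≤ n j) → ((ell (gF F n)).toNat : ℤ) = ∑ j, a j * n j - e) :
    0 ≤ e ∧ (e = 0 → ∃ x : Fin s → R, (∀ j, x j ∈ I j) ∧ (∀ j z, x j * z = 0 → z = 0) ∧
      (∀ n, gF F n = Ideal.span {xp x n}) ∧
      ∀ n : Fin s → ℕ, ((ell (gF F n)).toNat : ℤ) = ∑ j, a j * n j) := by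
  classical
  have hfin := gF_fin F hk
  have hfin2 : ∀ n K, ell (gF F n ⊔ K) ≠ ⊤ := fun n K h =>
    hfin n (top_le_iff.1 (h ▸ ell_anti le_sup_left))
  obtain ⟨k, hk⟩ := hk
  have hs := fun i => superficial' F i (ann_I k (hk i) h0)
  choose x hxI hnzd N' hN' using hs
  obtain ⟨m0, hm0⟩ := gF_bound F
  set M := N + ∑ j, N' j with hM
  have hMN' : ∀ j, N' j ≤ M := fun j => by
    have := Finset.single_le_sum (f := N') (fun _ _ => Nat.zero_le _) (Finset.mem_univ j)
    omega
  have hstep : ∀ i (n : Fin s → ℕ), (∀ j, M ≤ n j) →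
      ((ell (gF F (n + Pi.single i 1) ⊔ Ideal.span {x i})).toNat : ℤ) = a i := by
    intro i n hn
    have h1 := ell_split (gF F (n + Pi.single i 1)) (gF F n) (x i) (fun y =>
      ⟨fun hy => gF_mem_single F (hxI i) hy, fun hy => hN' i n (fun j => (hMN' i).trans (hn j)) y hy⟩)
    have h2 := congrArg ENat.toNat h1
    rw [ENat.toNat_add (hfin _) (hfin2 _ _)] at h2
    have h3 := hH n (fun j => by have := hn j; omega)
    have h4 := hH (n + Pi.single i 1) (fun j => by have := hn j; simp only [Pi.add_apply]; omega)
    have h5 : ∑ j, a j * (((n + Pi.single i 1 : Fin s → ℕ) j : ℕ) : ℤ) = ∑ j, a j * n j + a i := by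
      have : a i = ∑ j, a j * ((Pi.single i 1 : Fin s → ℕ) j) := by
        rw [Finset.sum_eq_single i] <;> simp +contextual [Pi.single_apply]
      conv_rhs => rw [this, ← Finset.sum_add_distrib]
      refine Finset.sum_congr rfl fun j _ => ?_
      simp only [Pi.add_apply]; push_cast; ring
    have h2' : ((ell (gF F (n + Pi.single i 1))).toNat : ℤ) = (ell (gF F n)).toNat +
      (ell (gF F (n + Pi.single i 1) ⊔ Ideal.span {x i})).toNat := by exact_mod_cast h2
    rw [h4, h3, h5] at h2'
    linarith
  have hle : ∀ i, gF F ((fun _ => M) + Pi.single i 1) ⊔ Ideal.span {x i} = Ideal.span {x i} := by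
    intro i
    apply le_antisymm _ le_sup_right
    intro y hy
    apply krull_sup
    intro t
    have h1 := hstep i (fun _ => M) (fun _ => le_rfl)
    have h2 := hstep i (fun _ => M + (t + m0)) (fun _ => by omega)
    have hsub : gF F ((fun _ => M + (t + m0)) + Pi.single i 1) ⊔ Ideal.span {x i} ≤
        gF F ((fun _ => M) + Pi.single i 1) ⊔ Ideal.span {x i} := by
      apply sup_le_sup_right
      apply gF_anti
      intro j; simp only [Pi.add_apply]; omega
    have heq := ell_eq hsub (hfin2 _ _) (by
      rw [← ENat.natCast_toNat (hfin2 _ _), ← ENat.natCast_toNat (hfin2 ((fun _ => M) + Pi.single i 1) _)]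
      rw [← h1] at h2
      exact_mod_cast h2)
    rw [← heq] at hy
    refine (sup_le_sup_right ?_ _ : _ ≤ maximalIdeal R ^ t ⊔ Ideal.span {x i}) hy
    refine (gF_anti F (m := (fun _ => t) + fun _ => m0) ?_).trans ((hm0 _).trans ?_)
    · intro j; simp only [Pi.add_apply]; omega
    · refine (Ideal.prod_le_inf).trans ((Finset.inf_le (Finset.mem_univ i)).trans ?_)
      exact Ideal.pow_right_mono (hm i) _
  have hxfin : ∀ i, ell (Ideal.span {x i}) ≠ ⊤ := fun i => by rw [← hle i]; exact hfin2 _ _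
  have hxa : ∀ i, ((ell (Ideal.span {x i})).toNat : ℤ) = a i := fun i => by
    rw [← hle i]; exact hstep i (fun _ => M) (fun _ => le_rfl)
  have hxp : ∀ n : Fin s → ℕ, ell (Ideal.span {xp x n}) =
      ((∑ j, n j * (ell (Ideal.span {x j})).toNat : ℕ) : ℕ∞) := by
    intro n
    rw [ell_xp hnzd]
    push_cast
    refine Finset.sum_congr rfl fun j _ => ?_
    rw [ENat.natCast_toNat (hxfin j), nsmul_eq_mul]
  have hxpf : ∀ n : Fin s → ℕ, ell (Ideal.span {xp x n}) ≠ ⊤ := fun n => by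
    rw [hxp]; exact ENat.natCast_ne_top _
  have hxpn : ∀ n : Fin s → ℕ, ((ell (Ideal.span {xp x n})).toNat : ℤ) = ∑ j, a j * n j := by
    intro n
    rw [hxp, ENat.toNat_natCast]
    push_cast
    refine Finset.sum_congr rfl fun j _ => ?_
    rw [hxa, mul_comm]
  have hsub : ∀ n, Ideal.span {xp x n} ≤ gF F n := fun n => by
    rw [Ideal.span_singleton_le_iff_mem]
    exact gF_prod F n (xp_mem hxI n)
  refine ⟨?_, fun he => ⟨x, hxI, hnzd, ?_⟩⟩
  · have h1 := ENat.toNat_le_toNat (ell_anti (hsub fun _ => N)) (hxpf _)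
    have h2 := hxpn (fun _ => N)
    have h3 := hH (fun _ => N) (fun _ => le_rfl)
    have h1' : ((ell (gF F fun _ => N)).toNat : ℤ) ≤ (ell (Ideal.span {xp x fun _ => N})).toNat := by
      exact_mod_cast h1
    linarith
  · have hlarge : ∀ n : Fin s → ℕ, (∀ j, N ≤ n j) → Ideal.span {xp x n} = gF F n := by
      intro n hn
      refine ell_eq (hsub n) (hfin n) ?_
      rw [← ENat.natCast_toNat (hfin n), ← ENat.natCast_toNat (hxpf n)]
      have h2 := hxpn n
      have h3 := hH n hn
      rw [he, sub_zero, ← h2] at h3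
      exact_mod_cast h3.symm
    have hall : ∀ n, gF F n = Ideal.span {xp x n} := by
      intro n
      apply le_antisymm _ (hsub n)
      intro u hu
      have h1 : u * xp x (fun _ => N) ∈ gF F (n + fun _ => N) :=
        gF_mul F _ _ (Ideal.mul_mem_mul hu (gF_prod F _ (xp_mem hxI _)))
      rw [← hlarge _ (fun j => by simp), Ideal.mem_span_singleton'] at h1
      obtain ⟨c, hc⟩ := h1
      rw [xp_add] at hc
      have : xp x (fun _ => N) * (u - c * xp x n) = 0 := by linear_combination -hc
      have := xp_nzd hnzd _ _ this
      rw [Ideal.mem_span_singleton']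
      exact ⟨c, (sub_eq_zero.1 this).symm⟩
    exact ⟨hall, fun n => by rw [hall, hxpn]⟩

lemma prodPow_map {R : Type u} [CommRing R] {S : Type u} [CommRing S] (f : R →+* S) {s : ℕ}
    (I : Fin s → Ideal R) (n : Fin s → ℤ) :
    prodPow (fun j => (I j).map f) n = (prodPow I n).map f := by
  unfold prodPow
  have := map_prod (Ideal.mapHom f) (fun i => I i ^ (n i).toNat) Finset.univ
  refine Eq.trans ?_ this.symm
  refine Finset.prod_congr rfl fun j _ => ?_
  exact (Ideal.map_pow f _ _).symm

/-- image filtration -/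
def mapFil {R : Type u} [CommRing R] {S : Type u} [CommRing S] (f : R →+* S) {s : ℕ}
    {I : Fin s → Ideal R} (F : AdmissibleFiltration R s I) :
    AdmissibleFiltration S s (fun j => (I j).map f) where
  F n := (F.F n).map f
  prodPow_le n := by rw [prodPow_map]; exact Ideal.map_mono (F.prodPow_le n)
  mul_le m n := by rw [← Ideal.map_mul]; exact Ideal.map_mono (F.mul_le m n)
  antitone m n h := Ideal.map_mono (F.antitone m n h)
  plus_eq n := by rw [← F.plus_eq]
  admissible := by
    obtain ⟨m, h0, h⟩ := F.admissible
    exact ⟨m, h0, fun n hn => by rw [prodPow_map, ← Ideal.map_mul, h n hn]⟩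

lemma QL {R : Type u} [CommRing R] [IsLocalRing R] [IsNoetherianRing R]
    [Infinite (IsLocalRing.ResidueField R)] {s : ℕ} {I : Fin s → Ideal R}
    (hm : ∀ j, I j ≤ maximalIdeal R) (hk : ∃ k, ∀ j, maximalIdeal R ^ k ≤ I j)
    (h0 : ∀ z : R, (∀ a ∈ maximalIdeal R, a * z = 0) → z = 0)
    (h1 : ∀ x ∈ maximalIdeal R, (∀ z, x * z = 0 → z = 0) →
      ∀ z : R, (∀ a ∈ maximalIdeal R, a * z ∈ Ideal.span {x}) → z ∈ Ideal.span {x})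
    (F : AdmissibleFiltration R s I) (i : Fin s) (a : Fin s → ℤ) (e : ℤ) (N : ℕ)
    (hH : ∀ n : Fin s → ℕ, (∀ j, N ≤ n j) →
      ((ell (gF F (n + Pi.single i 1))).toNat : ℤ) - (ell (gF F n)).toNat
        = ∑ j, a j * ((n + Pi.single i 1 : Fin s → ℕ) j : ℕ) - e) :
    0 ≤ e ∧ (e = 0 → ∃ x ∈ I i, (∀ z, x * z = 0 → z = 0) ∧
      (∃ N : ℕ, ∀ n : Fin s → ℕ, (∀ j, N ≤ n j) →
        ∀ y, x * y ∈ gF F (n + Pi.single i 1) → y ∈ gF F n) ∧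
      ∃ y : Fin s → R, (∀ j, y j ∈ I j) ∧
      (∀ n, gF F n ⊔ Ideal.span {x} = Ideal.span {xp y n} ⊔ Ideal.span {x}) ∧
      (∀ n k u, u * xp y k ∈ gF F (n + k) ⊔ Ideal.span {x} → u ∈ gF F n ⊔ Ideal.span {x}) ∧
      ∀ n : Fin s → ℕ, ((ell (gF F n ⊔ Ideal.span {x})).toNat : ℤ) = ∑ j, a j * n j) := by
  classical
  have hfin := gF_fin F hk
  have hfin2 : ∀ n K, ell (gF F n ⊔ K) ≠ ⊤ := fun n K h =>
    hfin n (top_le_iff.1 (h ▸ ell_anti le_sup_left))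
  obtain ⟨k, hk⟩ := hk
  obtain ⟨x, hxI, hnzd, N', hN'⟩ := superficial' F i (ann_I k (hk i) h0)
  have hxm := hm i hxI
  set f := Ideal.Quotient.mk (Ideal.span {x}) with hf
  have hfs : Function.Surjective f := Ideal.Quotient.mk_surjective
  have hker : ∀ z, f z = 0 ↔ z ∈ Ideal.span {x} := fun z => Ideal.Quotient.eq_zero_iff_mem
  have : Nontrivial (R ⧸ Ideal.span {x}) := by
    apply Ideal.Quotient.nontrivial_iff.2
    intro h
    have : Ideal.span {x} ≤ maximalIdeal R := (Ideal.span_singleton_le_iff_mem _).2 hxm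
    rw [h] at this
    exact (IsLocalRing.maximalIdeal.isMaximal R).ne_top (top_le_iff.1 this)
  have : IsLocalRing (R ⧸ Ideal.span {x}) := IsLocalRing.of_surjective' f hfs
  have : IsLocalHom f := hfs.isLocalHom
  have : Infinite (ResidueField (R ⧸ Ideal.span {x})) :=
    Infinite.of_injective (ResidueField.map f) (RingHom.injective _)
  have hmax : maximalIdeal (R ⧸ Ideal.span {x}) = (maximalIdeal R).map f :=
    (IsLocalRing.map_maximalIdeal_of_surjective f hfs).symm
  have hg : ∀ n, gF (mapFil f F) n = (gF F n).map f := fun n => rfl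
  have hmem : ∀ (K : Ideal R) u, f u ∈ K.map f ↔ u ∈ K ⊔ Ideal.span {x} := fun K u =>
    Ideal.mem_quotient_iff_mem_sup
  obtain ⟨he, hrest⟩ := dim1 (F := mapFil f F) (fun j => by rw [hmax]; exact Ideal.map_mono (hm j))
    ⟨k, fun j => by rw [hmax, ← Ideal.map_pow]; exact Ideal.map_mono (hk j)⟩
    (by
      intro z hz
      obtain ⟨z, rfl⟩ := hfs z
      rw [hker]
      apply h1 x hxm hnzd
      intro a ha
      rw [← hker, map_mul]
      apply hz
      rw [hmax]
      exact Ideal.mem_map_of_mem _ ha) a e (N + N' + 1) (by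
      intro n hn
      rw [hg, ell_quot]
      obtain ⟨n', rfl⟩ : ∃ n' : Fin s → ℕ, n = n' + (Pi.single i 1 : Fin s → ℕ) := by
        refine ⟨fun j => n j - (Pi.single i 1 : Fin s → ℕ) j, ?_⟩
        funext j
        have := hn j
        show n j = (n j - (Pi.single i 1 : Fin s → ℕ) j) + (Pi.single i 1 : Fin s → ℕ) j
        by_cases h : j = i
        · subst h; simp; omega
        · simp [h]
      have hn' : ∀ j, N + N' ≤ n' j := by
        intro j
        have : N + N' + 1 ≤ n' j + (Pi.single i 1 : Fin s → ℕ) j := hn j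
        by_cases h : j = i
        · subst h; simp at this; omega
        · simp [h] at this; omega
      rw [← hH n' (fun j => by have := hn' j; omega)]
      have h1 := ell_split (gF F (n' + Pi.single i 1)) (gF F n') x (fun y =>
        ⟨fun hy => gF_mem_single F hxI hy,
          fun hy => hN' n' (fun j => by have := hn' j; omega) y hy⟩)
      have h2 := congrArg ENat.toNat h1
      rw [ENat.toNat_add (hfin _) (hfin2 _ _)] at h2
      rw [h2]; push_cast; ring)
  refine ⟨he, fun h => ?_⟩
  obtain ⟨y, hyI, hynzd, hyg, hyl⟩ := hrest h
  have hy' : ∀ j, ∃ b ∈ I j, f b = y j := fun j => by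
    have := hyI j
    rwa [Ideal.mem_map_iff_of_surjective _ hfs] at this
  choose b hbI hb using hy'
  have hxp : ∀ n, f (xp b n) = xp y n := fun n => by simp [xp, hb]
  have hg2 : ∀ n, gF F n ⊔ Ideal.span {x} = Ideal.span {xp b n} ⊔ Ideal.span {x} := by
    intro n
    ext u
    rw [← hmem, ← hg, hyg, ← hxp, ← hmem, Ideal.map_span, Set.image_singleton]
  refine ⟨x, hxI, hnzd, ⟨N', hN'⟩, b, hbI, hg2, ?_, ?_⟩
  · intro n k u hu
    rw [← hmem, ← hg, hyg, xp_add, Ideal.mem_span_singleton'] at hu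
    obtain ⟨c, hc⟩ := hu
    rw [map_mul, hxp] at hc
    have := xp_nzd hynzd k (f u - c * xp y n) (by linear_combination -hc)
    rw [← hmem, ← hg, hyg, Ideal.mem_span_singleton']
    exact ⟨c, (sub_eq_zero.1 this).symm⟩
  · intro n
    rw [← ell_quot, ← hyl, ← hg]

lemma vec_ind {s : ℕ} {P : (Fin s → ℕ) → Prop} (h0 : P 0)
    (h : ∀ (n : Fin s → ℕ) (i : Fin s), P n → P (n + Pi.single i 1)) : ∀ n, P n := by
  have : ∀ t : ℕ, ∀ n : Fin s → ℕ, ∑ j, n j = t → P n := by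
    intro t
    induction t with
    | zero =>
      intro n hn
      have : n = 0 := by
        funext j
        exact (Finset.sum_eq_zero_iff.1 hn) j (Finset.mem_univ j)
      rw [this]; exact h0
    | succ t ih =>
      intro n hn
      obtain ⟨i, hi⟩ : ∃ i, n i ≠ 0 := by
        by_contra hcon
        push Not at hcon
        rw [Finset.sum_eq_zero (fun j _ => hcon j)] at hn
        omega
      obtain ⟨n', rfl⟩ : ∃ n' : Fin s → ℕ, n = n' + (Pi.single i 1 : Fin s → ℕ) := by
        refine ⟨fun j => n j - (Pi.single i 1 : Fin s → ℕ) j, ?_⟩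
        funext j
        show n j = (n j - (Pi.single i 1 : Fin s → ℕ) j) + (Pi.single i 1 : Fin s → ℕ) j
        by_cases h : j = i
        · subst h; simp; omega
        · simp [h]
      apply h
      apply ih
      simp only [Pi.add_apply, Finset.sum_add_distrib] at hn
      simp at hn
      exact hn
  exact fun n => this _ n rfl

lemma prod_single {R : Type u} [CommSemiring R] {s : ℕ} (f : Fin s → R) (n : Fin s → ℕ) (i : Fin s) :
    ∏ j, f j ^ ((n + Pi.single i 1 : Fin s → ℕ) j) = f i * ∏ j, f j ^ n j := by
  simp only [Pi.add_apply, pow_add, Finset.prod_mul_distrib]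
  rw [mul_comm]
  congr 1
  rw [Finset.prod_eq_single i]
  · simp
  · intro j _ hj; simp [hj]
  · simp

lemma main2 {R : Type u} [CommRing R] [IsLocalRing R] [IsNoetherianRing R]
    [Infinite (IsLocalRing.ResidueField R)] {s : ℕ} {I : Fin s → Ideal R}
    (hm : ∀ j, I j ≤ maximalIdeal R) (hk : ∃ k, ∀ j, maximalIdeal R ^ k ≤ I j)
    (h0 : ∀ z : R, (∀ a ∈ maximalIdeal R, a * z = 0) → z = 0)
    (h1 : ∀ x ∈ maximalIdeal R, (∀ z, x * z = 0 → z = 0) →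
      ∀ z : R, (∀ a ∈ maximalIdeal R, a * z ∈ Ideal.span {x}) → z ∈ Ideal.span {x})
    (F : AdmissibleFiltration R s I) (P : (Fin s → ℕ) → ℤ) (a : Fin s → Fin s → ℤ)
    (hP : ∀ (n : Fin s → ℕ) i, P (n + Pi.single i 1) - P n =
      ∑ j, a i j * ((n + Pi.single i 1 : Fin s → ℕ) j : ℕ)) (N : ℕ)
    (hH : ∀ n : Fin s → ℕ, (∀ j, N ≤ n j) → ((ell (gF F n)).toNat : ℤ) = P n) :
    (∀ n, gF F n = ∏ j, I j ^ n j) ∧ (∀ n, ((ell (gF F n)).toNat : ℤ) = P n) ∧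
      ∀ i, ∃ p q, I i = Ideal.span {p, q} := by
  classical
  have hfin := gF_fin F hk
  have hfin2 : ∀ n K, ell (gF F n ⊔ K) ≠ ⊤ := fun n K h =>
    hfin n (top_le_iff.1 (h ▸ ell_anti le_sup_left))
  have hQ' := fun i => (QL hm hk h0 h1 F i (a i) 0 N (by
    intro n hn
    rw [hH n hn, hH _ (fun j => by have := hn j; simp only [Pi.add_apply]; omega), hP, sub_zero])).2
  simp only [true_imp_iff] at hQ'
  choose x hxI hxnzd hMM y hyI hyg hyc hyl using hQ'
  choose M hM using hMM
  have hA : ∀ n, ∀ u, (∃ k : ℕ, ∀ k' ≥ k, ∀ w ∈ ∏ j, I j ^ ((fun _ => k' : Fin s → ℕ) j),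
      u * w ∈ gF F (n + fun _ => k')) → u ∈ gF F n := by
    apply vec_ind
    · intro u _; rw [gF_zero]; trivial
    · rintro n i ih u ⟨k, hk⟩
      have hu : u ∈ gF F (n + Pi.single i 1) ⊔ Ideal.span {x i} := by
        apply hyc i _ (fun _ => k)
        apply Ideal.mem_sup_left
        exact hk k le_rfl _ (xp_mem (hyI i) _)
      obtain ⟨f, hf, b, hb, rfl⟩ := Submodule.mem_sup.1 hu
      obtain ⟨v, rfl⟩ := Ideal.mem_span_singleton'.1 hb
      refine Ideal.add_mem _ hf ?_
      rw [mul_comm]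
      apply gF_mem_single F (hxI i)
      apply ih
      refine ⟨k + M i, fun k' hk' w hw => ?_⟩
      apply hM i _ (fun j => by simp only [Pi.add_apply]; omega)
      have h2 := hk k' (by omega) w hw
      have h3 : f * w ∈ gF F (n + Pi.single i 1 + fun _ => k') :=
        gF_mul F _ _ (Ideal.mul_mem_mul hf (gF_prod F _ hw))
      have h4 := Ideal.sub_mem _ h2 h3
      rw [add_right_comm] at h4
      convert h4 using 1
      ring
  have hB : ∀ n i u, x i * u ∈ gF F (n + Pi.single i 1) → u ∈ gF F n := by
    intro n i u hu
    apply hA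
    refine ⟨M i, fun k' hk' w hw => ?_⟩
    apply hM i _ (fun j => by simp only [Pi.add_apply]; omega)
    rw [← mul_assoc, add_right_comm]
    exact gF_mul F _ _ (Ideal.mul_mem_mul hu (gF_prod F _ hw))
  have hC : ∀ n, gF F n ≤ ∏ j, I j ^ n j := by
    apply vec_ind
    · simp only [Pi.zero_apply, pow_zero, Finset.prod_const_one]
      rw [Ideal.one_eq_top]; exact le_top
    · intro n i ih u hu
      have hu' : u ∈ gF F (n + Pi.single i 1) ⊔ Ideal.span {x i} := Ideal.mem_sup_left hu
      rw [hyg] at hu'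
      obtain ⟨f, hf, b, hb, rfl⟩ := Submodule.mem_sup.1 hu'
      obtain ⟨v, rfl⟩ := Ideal.mem_span_singleton'.1 hb
      have hf' : f ∈ ∏ j, I j ^ ((n + Pi.single i 1 : Fin s → ℕ) j) :=
        (Ideal.span_singleton_le_iff_mem _).2 (xp_mem (hyI i) _) hf
      refine Ideal.add_mem _ hf' ?_
      have h2 : x i * v ∈ gF F (n + Pi.single i 1) := by
        have := Ideal.sub_mem _ hu (gF_prod F _ hf')
        convert this using 1
        ring
      rw [prod_single, mul_comm v]
      exact Ideal.mul_mem_mul (hxI i) (ih (hB _ _ _ h2))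
  refine ⟨fun n => le_antisymm (hC n) (gF_prod F n), ?_, ?_⟩
  · have hstep : ∀ (n : Fin s → ℕ) i, ((ell (gF F (n + Pi.single i 1))).toNat : ℤ) - P (n + Pi.single i 1) =
        (ell (gF F n)).toNat - P n := by
      intro n i
      have h1 := ell_split (gF F (n + Pi.single i 1)) (gF F n) (x i) (fun y =>
        ⟨fun hy => gF_mem_single F (hxI i) hy, fun hy => hB n i y hy⟩)
      have h2 := congrArg ENat.toNat h1
      rw [ENat.toNat_add (hfin _) (hfin2 _ _)] at h2
      have h3 := hyl i (n + Pi.single i 1)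
      have h4 := hP n i
      rw [← h3] at h4
      rw [h2]; push_cast; linarith
    have hall : ∀ n m : Fin s → ℕ, ((ell (gF F (n + m))).toNat : ℤ) - P (n + m) =
        (ell (gF F n)).toNat - P n := by
      intro n
      apply vec_ind
      · simp
      · intro m i ih
        rw [← add_assoc, hstep, ih]
    intro n
    have := hall n (fun _ => N)
    rw [hH _ (fun j => by simp), sub_self] at this
    linarith
  · intro i
    refine ⟨y i i, x i, le_antisymm ?_ ?_⟩
    · have h2 : I i ≤ gF F (Pi.single i 1) ⊔ Ideal.span {x i} := (gF_single F i).trans le_sup_left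
      rw [hyg] at h2
      have h3 : xp (y i) (Pi.single i 1) = y i i := by
        have := prod_single (y i) 0 i
        simpa [xp] using this
      rw [h3] at h2
      rw [Ideal.span_insert]
      exact h2
    · rw [Ideal.span_le]
      rintro z (rfl | rfl)
      · exact hyI i i
      · exact hxI i

lemma ringchoose1 (x : ℤ) : Ring.choose x 1 = x := by simp

lemma ringchoose2 (x : ℤ) : 2 * Ring.choose x 2 = x * (x - 1) := by
  have := Ring.choose_smul_choose x (n := 2) (k := 1) (by norm_num)
  simpa using this

lemma hilb1 (c : (Fin 2 → ℕ) → ℤ) (n : Fin 2 → ℤ) :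
    hilbPoly 2 1 c n = c ![1,0] * n 0 + c ![0,1] * n 1 - c ![0,0] := by
  have : (Finset.univ.filter (fun α : Fin 2 → Fin (1+1) => (∑ i, (α i : ℕ)) ≤ 1)) =
    {![0,0], ![1,0], ![0,1]} := by decide
  have e : ∀ a b : Fin 2, (fun i => ((![a,b] : Fin 2 → Fin 2) i : ℕ)) = ![(a:ℕ), (b:ℕ)] := by
    intro a b; funext i; fin_cases i <;> rfl
  unfold hilbPoly
  rw [this, Finset.sum_insert (by decide), Finset.sum_insert (by decide), Finset.sum_singleton]
  simp only [e]
  simp [Fin.sum_univ_two, Fin.prod_univ_two]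
  ring

lemma hilb2 (c : (Fin 2 → ℕ) → ℤ) (n : Fin 2 → ℤ) :
    2 * hilbPoly 2 2 c n = c ![2,0] * (n 0 * (n 0 + 1)) + 2 * (c ![1,1] * n 0 * n 1) +
      c ![0,2] * (n 1 * (n 1 + 1)) - 2 * (c ![1,0] * n 0) - 2 * (c ![0,1] * n 1) + 2 * c ![0,0] := by
  have : (Finset.univ.filter (fun α : Fin 2 → Fin (2+1) => (∑ i, (α i : ℕ)) ≤ 2)) =
    {![0,0], ![1,0], ![0,1], ![2,0], ![1,1], ![0,2]} := by decide
  have e : ∀ a b : Fin 3, (fun i => ((![a,b] : Fin 2 → Fin 3) i : ℕ)) = ![(a:ℕ), (b:ℕ)] := by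
    intro a b; funext i; fin_cases i <;> rfl
  unfold hilbPoly
  rw [this, Finset.sum_insert (by decide), Finset.sum_insert (by decide),
    Finset.sum_insert (by decide), Finset.sum_insert (by decide), Finset.sum_insert (by decide), Finset.sum_singleton]
  simp only [e]
  simp [Fin.sum_univ_two, Fin.prod_univ_two]
  have h0 := ringchoose2 (n 0 + 2 - 1)
  have h1 := ringchoose2 (n 1 + 2 - 1)
  linear_combination c ![2,0] * h0 + c ![0,2] * h1

lemma cm1 {R : Type u} [CommRing R] [IsLocalRing R] (a : R) (ha : a ∈ maximalIdeal R)
    (hr : IsSMulRegular R a) : ∀ z : R, (∀ b ∈ maximalIdeal R, b * z = 0) → z = 0 := by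
  intro z hz
  apply hr
  simpa using hz a ha

lemma cm2 {R : Type u} [CommRing R] [IsLocalRing R] (a b : R) (ha : a ∈ maximalIdeal R)
    (hb : b ∈ maximalIdeal R) (hr : IsSMulRegular R a)
    (hr2 : ∀ w, b * w ∈ Ideal.span {a} → w ∈ Ideal.span {a}) :
    ∀ x ∈ maximalIdeal R, (∀ z, x * z = 0 → z = 0) →
      ∀ z : R, (∀ a ∈ maximalIdeal R, a * z ∈ Ideal.span {x}) → z ∈ Ideal.span {x} := by
  intro x hx hnzd z hz
  have hra : ∀ z, a * z = 0 → z = 0 := fun z h => hr (by simpa using h)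
  obtain ⟨w, hw⟩ := Ideal.mem_span_singleton'.1 (hz a ha)
  obtain ⟨v, hv⟩ := Ideal.mem_span_singleton'.1 (hz b hb)
  have h1 : b * w ∈ Ideal.span {a} := by
    rw [Ideal.mem_span_singleton']
    refine ⟨v, ?_⟩
    have := hnzd (b * w - v * a) (by linear_combination b * hw - a * hv)
    linear_combination -this
  obtain ⟨t, ht⟩ := Ideal.mem_span_singleton'.1 (hr2 w h1)
  rw [Ideal.mem_span_singleton']
  refine ⟨t, ?_⟩
  have := hra (z - t * x) (by linear_combination -hw - x * ht)
  linear_combination -this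

open Pointwise in
lemma cm_extract {R : Type u} [CommRing R] [IsLocalRing R] (hCM : IsCMLocal R) (d : ℕ)
    (hd1 : 1 ≤ d) (hdim : ringKrullDim R = d) :
    (∀ z : R, (∀ b ∈ maximalIdeal R, b * z = 0) → z = 0) ∧
    (2 ≤ d → ∀ x ∈ maximalIdeal R, (∀ z, x * z = 0 → z = 0) →
      ∀ z : R, (∀ a ∈ maximalIdeal R, a * z ∈ Ideal.span {x}) → z ∈ Ideal.span {x}) := by
  obtain ⟨rs, hmem, hreg, hlen⟩ := hCM
  rw [hdim] at hlen
  have hlen : rs.length = d := by exact_mod_cast hlen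
  match rs, hmem, hreg, hlen with
  | [], _, _, hlen => simp at hlen; omega
  | [a], hmem, hreg, hlen =>
    rw [RingTheory.Sequence.isRegular_cons_iff] at hreg
    refine ⟨cm1 a (hmem a (by simp)) hreg.1, fun h => ?_⟩
    simp at hlen; omega
  | a :: b :: l, hmem, hreg, hlen =>
    rw [RingTheory.Sequence.isRegular_cons_iff, RingTheory.Sequence.isRegular_cons_iff] at hreg
    refine ⟨cm1 a (hmem a (by simp)) hreg.1, fun _ => cm2 a b (hmem a (by simp))
      (hmem b (by simp)) hreg.1 ?_⟩
    intro w hw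
    have hS : (a • ⊤ : Submodule R R) = Ideal.span {a} := by
      ext z
      rw [Submodule.mem_smul_pointwise_iff_exists, Ideal.mem_span_singleton']
      constructor
      · rintro ⟨y, _, rfl⟩; exact ⟨y, by simp [mul_comm]⟩
      · rintro ⟨y, rfl⟩; exact ⟨y, trivial, by simp [mul_comm]⟩
    have h2 := hreg.2.1
    have : b • (Submodule.Quotient.mk w : QuotSMulTop a R) = b • 0 := by
      rw [smul_zero, ← Submodule.Quotient.mk_smul, Submodule.Quotient.mk_eq_zero, hS]
      exact hw
    have h3 := h2 this
    rw [Submodule.Quotient.mk_eq_zero, hS] at h3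
    exact h3

lemma mprim {R : Type u} [CommRing R] [IsLocalRing R] [IsNoetherianRing R] {I : Ideal R}
    (h : IsMPrimary R I) : I ≤ maximalIdeal R ∧ ∃ k, maximalIdeal R ^ k ≤ I :=
  ⟨IsLocalRing.le_maximalIdeal h.1,
    Ideal.exists_pow_le_of_le_radical_of_fg h.2 (IsNoetherian.noetherian _)⟩

lemma ell_sq {R : Type u} [CommRing R] (f g : R) :
    ell (Ideal.span {f, g} ^ 2) ≤ 3 * ell (Ideal.span {f, g}) := by
  set I := Ideal.span {f, g} with hI
  have hf : f ∈ I := Ideal.subset_span (by simp)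
  have hg : g ∈ I := Ideal.subset_span (by simp)
  have key : ∀ K : Ideal R, I ^ 2 ≤ K → ∀ x ∈ I, ell K ≤ ell I + ell (K ⊔ Ideal.span {x}) := by
    intro K hK x hx
    rw [ell_split K (Submodule.comap (LinearMap.mulLeft R x) K) x (fun y => Iff.rfl)]
    gcongr
    apply ell_anti
    intro y hy
    apply hK
    rw [pow_two]
    exact Ideal.mul_mem_mul hx hy
  have h1 := key _ le_rfl f hf
  have h2 := key (I ^ 2 ⊔ Ideal.span {f}) le_sup_left g hg
  have h3 : I ≤ I ^ 2 ⊔ Ideal.span {f} ⊔ Ideal.span {g} := by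
    conv_lhs => rw [hI, Ideal.span_insert]
    exact sup_le (le_sup_right.trans le_sup_left) le_sup_right
  have h4 := ell_anti h3
  calc _ ≤ ell I + (ell I + ell I) := h1.trans (by gcongr; exact h2.trans (by gcongr))
    _ = 3 * ell I := by ring

lemma hilbFn_nat {R : Type u} [CommRing R] {s : ℕ} {I : Fin s → Ideal R}
    (F : AdmissibleFiltration R s I) (n : Fin s → ℕ) :
    hilbFn F (fun j => (n j : ℤ)) = ((ell (gF F n)).toNat : ℤ) := lenI_eq _

lemma hilb2_diff (c : (Fin 2 → ℕ) → ℤ) (n : Fin 2 → ℕ) (i : Fin 2) :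
    hilbPoly 2 2 c (fun j => (((n + Pi.single i 1 : Fin 2 → ℕ) j : ℕ) : ℤ))
      - hilbPoly 2 2 c (fun j => (n j : ℤ)) =
    ∑ j, (![![c ![2,0], c ![1,1]], ![c ![1,1], c ![0,2]]] : Fin 2 → Fin 2 → ℤ) i j *
      ((n + Pi.single i 1 : Fin 2 → ℕ) j : ℕ) - (![c ![1,0], c ![0,1]] : Fin 2 → ℤ) i := by
  have h1 := hilb2 c (fun j => (((n + Pi.single i 1 : Fin 2 → ℕ) j : ℕ) : ℤ))
  have h2 := hilb2 c (fun j => (n j : ℤ))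
  revert h1
  fin_cases i
  · intro h1
    simp [Fin.sum_univ_two] at h1 ⊢
    linarith
  · intro h1
    simp [Fin.sum_univ_two] at h1 ⊢
    linarith

lemma range_fin2 {R : Type u} (f : Fin 2 → R) : Set.range f = {f 0, f 1} := by
  ext z; simp [Fin.exists_fin_two, eq_comm]

section fin
variable {R : Type u} [CommRing R] [IsLocalRing R] [IsNoetherianRing R]
    [Infinite (IsLocalRing.ResidueField R)] {I J : Ideal R}
    (F : AdmissibleFiltration R 2 ![I, J])

lemma F_all (h : ∀ n, gF F n = ∏ j, (![I, J] : Fin 2 → Ideal R) j ^ n j) (n : Fin 2 → ℤ) :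
    F.F n = I ^ (n 0).toNat * J ^ (n 1).toNat := by
  have h1 : F.F n = gF F (fun j => (n j).toNat) := by
    rw [F.plus_eq]
    unfold gF
    congr 1
    funext j
    simp only [vplus]; omega
  rw [h1, h]
  simp [Fin.prod_univ_two]

lemma P_all {d : ℕ} {c : (Fin 2 → ℕ) → ℤ}
    (h : ∀ n : Fin 2 → ℕ, hilbPoly 2 d c (fun j => (n j : ℤ)) = ((ell (gF F n)).toNat : ℤ))
    (n : Fin 2 → ℤ) (hn : 0 ≤ n) : hilbPoly 2 d c n = hilbFn F n := by
  obtain ⟨k, rfl⟩ := exists_vecZ n hn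
  exact (h k).trans (hilbFn_nat F k).symm

lemma step12 (d : ℕ) (hd1 : 1 ≤ d) (hd2 : d ≤ 2)
    (hdim : ringKrullDim R = d) (hCM : IsCMLocal R) (hI : IsMPrimary R I) (hJ : IsMPrimary R J)
    (c : (Fin 2 → ℕ) → ℤ) (hc : IsHilbCoeffs F d c)
    (h : ∀ i : Fin 2, c (fun j => if j = i then d - 1 else 0) = 0) :
    ((∃ f : Fin d → R, I = Ideal.span (Set.range f))
          ∧ (∃ g : Fin d → R, J = Ideal.span (Set.range g))
          ∧ (∀ n : Fin 2 → ℤ, 0 ≤ n → hilbPoly 2 d c n = hilbFn F n)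
          ∧ (∀ n : Fin 2 → ℤ, F.F n = I ^ (n 0).toNat * J ^ (n 1).toNat)) := by
  obtain ⟨h0, h1⟩ := cm_extract hCM d hd1 hdim
  obtain ⟨hmI, kI, hkI⟩ := mprim hI
  obtain ⟨hmJ, kJ, hkJ⟩ := mprim hJ
  have hm : ∀ j, (![I, J] : Fin 2 → Ideal R) j ≤ maximalIdeal R := by
    intro j; fin_cases j
    · exact hmI
    · exact hmJ
  have hk : ∃ k, ∀ j, maximalIdeal R ^ k ≤ (![I, J] : Fin 2 → Ideal R) j := by
    refine ⟨kI + kJ, fun j => ?_⟩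
    fin_cases j
    · exact (Ideal.pow_le_pow_right (by omega)).trans hkI
    · exact (Ideal.pow_le_pow_right (by omega)).trans hkJ
  obtain ⟨N, hN⟩ := hc
  have hN' : ∀ n : Fin 2 → ℕ, (∀ j, N ≤ n j) →
      ((ell (gF F n)).toNat : ℤ) = hilbPoly 2 d c (fun j => (n j : ℤ)) := by
    intro n hn
    rw [hN _ (fun j => by exact_mod_cast hn j), hilbFn_nat]
  obtain rfl | rfl : d = 1 ∨ d = 2 := by omega
  · have hc0 : c ![0,0] = 0 := by
      rw [← h 0]; congr 1; funext j; fin_cases j <;> rfl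
    obtain ⟨-, hr⟩ := dim1 hm hk h0 F ![c ![1,0], c ![0,1]] 0 N (by
      intro n hn
      rw [hN' n hn, hilb1, hc0]
      simp [Fin.sum_univ_two])
    obtain ⟨x, hxI, hxn, hg, hl⟩ := hr rfl
    have hX : ∀ j, (![I, J] : Fin 2 → Ideal R) j = Ideal.span {x j} := by
      intro j
      apply le_antisymm
      · refine (gF_single F j).trans (le_of_eq ?_)
        rw [hg]
        have := prod_single x 0 j
        congr 2
        simpa [xp] using this
      · rw [Ideal.span_singleton_le_iff_mem]; exact hxI j
    have hr : ∀ y : R, Ideal.span {y} = Ideal.span (Set.range (fun _ : Fin 1 => y)) := by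
      intro y; rw [Set.range_const]
    refine ⟨⟨fun _ => x 0, (hX 0).trans (hr _)⟩, ⟨fun _ => x 1, (hX 1).trans (hr _)⟩, P_all F ?_, F_all F ?_⟩
    · intro n
      rw [hl, hilb1, hc0]; simp [Fin.sum_univ_two]
    · intro n
      rw [hg]
      simp only [hX, Ideal.span_singleton_pow, Ideal.prod_span_singleton]
      rfl
  · have h10 : c ![1,0] = 0 := by
      rw [← h 0]; congr 1; funext j; fin_cases j <;> rfl
    have h01 : c ![0,1] = 0 := by
      rw [← h 1]; congr 1; funext j; fin_cases j <;> rfl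
    obtain ⟨hA, hB, hC⟩ := main2 hm hk h0 (h1 le_rfl) F (fun n => hilbPoly 2 2 c (fun j => (n j : ℤ)))
      _ (by
        intro n i
        have := hilb2_diff c n i
        have hz : (![c ![1,0], c ![0,1]] : Fin 2 → ℤ) i = 0 := by
          rw [h10, h01]; fin_cases i <;> rfl
        rw [hz, sub_zero] at this
        exact this) N hN'
    have hgen : ∀ K : Ideal R, (∃ p q, K = Ideal.span {p, q}) →
        ∃ f : Fin 2 → R, K = Ideal.span (Set.range f) := by
      rintro K ⟨p, q, h⟩
      exact ⟨![p, q], by rw [range_fin2]; exact h⟩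
    exact ⟨hgen _ (hC 0), hgen _ (hC 1), P_all F (fun n => (hB n).symm), F_all F hA⟩

lemma step23 (d : ℕ) (hd1 : 1 ≤ d) (hd2 : d ≤ 2)
    (hdim : ringKrullDim R = d) (hCM : IsCMLocal R) (hI : IsMPrimary R I) (hJ : IsMPrimary R J)
    (c : (Fin 2 → ℕ) → ℤ)
    (h : ((∃ f : Fin d → R, I = Ideal.span (Set.range f))
          ∧ (∃ g : Fin d → R, J = Ideal.span (Set.range g))
          ∧ (∀ n : Fin 2 → ℤ, 0 ≤ n → hilbPoly 2 d c n = hilbFn F n)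
          ∧ (∀ n : Fin 2 → ℤ, F.F n = I ^ (n 0).toNat * J ^ (n 1).toNat))) :
    ∀ α : Fin 2 → ℕ, α 0 + α 1 ≤ d - 1 → c α = 0 := by
  obtain ⟨h0, h1⟩ := cm_extract hCM d hd1 hdim
  obtain ⟨hmI, kI, hkI⟩ := mprim hI
  obtain ⟨hmJ, kJ, hkJ⟩ := mprim hJ
  have hm : ∀ j, (![I, J] : Fin 2 → Ideal R) j ≤ maximalIdeal R := by
    intro j; fin_cases j
    · exact hmI
    · exact hmJ
  have hk : ∃ k, ∀ j, maximalIdeal R ^ k ≤ (![I, J] : Fin 2 → Ideal R) j := by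
    refine ⟨kI + kJ, fun j => ?_⟩
    fin_cases j
    · exact (Ideal.pow_le_pow_right (by omega)).trans hkI
    · exact (Ideal.pow_le_pow_right (by omega)).trans hkJ
  obtain ⟨⟨f, hf⟩, ⟨g, hg⟩, hP, hF⟩ := h
  have hP' : ∀ n : Fin 2 → ℕ,
      ((ell (gF F n)).toNat : ℤ) = hilbPoly 2 d c (fun j => (n j : ℤ)) := by
    intro n
    rw [hP _ (fun j => by simp), hilbFn_nat]
  have hZ := hP' 0
  rw [gF_zero, ell_top] at hZ
  obtain rfl | rfl : d = 1 ∨ d = 2 := by omega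
  · rw [hilb1] at hZ
    simp at hZ
    intro α hα
    have : α = ![0,0] := by
      funext j; fin_cases j
      · show α 0 = 0
        omega
      · show α 1 = 0
        omega
    rw [this, ← hZ]
  · have hfin := gF_fin F hk
    have h2 := hilb2 c (fun j => (((0 : Fin 2 → ℕ) j : ℕ) : ℤ))
    rw [← hZ] at h2
    have h00 : c ![0,0] = 0 := by simpa using h2
    have hge : ∀ i, 0 ≤ (![c ![1,0], c ![0,1]] : Fin 2 → ℤ) i := fun i =>
      (QL hm hk h0 (h1 le_rfl) F i _ _ 0 (by
        intro n _
        rw [hP', hP']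
        exact hilb2_diff c n i)).1
    have hsq : ∀ (K : Ideal R) (f : Fin 2 → R), K = Ideal.span (Set.range f) → ell K ≠ ⊤ →
        ((ell (K ^ 2)).toNat : ℤ) ≤ 3 * (ell K).toNat := by
      intro K f hf hK
      have h := ell_sq (f 0) (f 1)
      rw [← range_fin2, ← hf] at h
      have h2 : ell (K ^ 2) ≤ ((3 * (ell K).toNat : ℕ) : ℕ∞) := by
        push_cast
        rw [ENat.natCast_toNat hK]
        exact h
      have h' := ENat.toNat_le_toNat h2 (ENat.natCast_ne_top _)
      rw [ENat.toNat_natCast] at h'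
      exact_mod_cast h'
    have hgI : ∀ a b : ℕ, gF F ![a, b] = I ^ a * J ^ b := by
      intro a b
      unfold gF
      rw [hF]
      simp
    have h10 : c ![1,0] = 0 := by
      have e1 := hP' ![1,0]
      have e2 := hP' ![2,0]
      have e3 := hilb2 c (fun j => ((![1,0] : Fin 2 → ℕ) j : ℤ))
      have e4 := hilb2 c (fun j => ((![2,0] : Fin 2 → ℕ) j : ℤ))
      have ef := hfin ![1,0]
      rw [← e1] at e3
      rw [← e2] at e4
      rw [hgI] at e3 e4 ef
      simp at e3 e4 ef
      have := hsq I f hf ef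
      have h5 := hge 0
      simp at h5
      rw [h00] at e3 e4
      linarith
    have h01 : c ![0,1] = 0 := by
      have e1 := hP' ![0,1]
      have e2 := hP' ![0,2]
      have e3 := hilb2 c (fun j => ((![0,1] : Fin 2 → ℕ) j : ℤ))
      have e4 := hilb2 c (fun j => ((![0,2] : Fin 2 → ℕ) j : ℤ))
      have ef := hfin ![0,1]
      rw [← e1] at e3
      rw [← e2] at e4
      rw [hgI] at e3 e4 ef
      simp at e3 e4 ef
      have := hsq J g hg ef
      have h5 := hge 1
      simp at h5
      rw [h00] at e3 e4
      linarith
    intro α hα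
    have hα' : α = ![α 0, α 1] := by
      funext j; fin_cases j <;> rfl
    rw [hα']
    have : (α 0 = 0 ∧ α 1 = 0) ∨ (α 0 = 1 ∧ α 1 = 0) ∨ (α 0 = 0 ∧ α 1 = 1) := by omega
    rcases this with ⟨a, b⟩ | ⟨a, b⟩ | ⟨a, b⟩ <;> rw [a, b] <;> assumption

lemma step31 (d : ℕ) (c : (Fin 2 → ℕ) → ℤ)
    (h : ∀ α : Fin 2 → ℕ, α 0 + α 1 ≤ d - 1 → c α = 0) :
    ∀ i : Fin 2, c (fun j => if j = i then d - 1 else 0) = 0 := by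
  intro i
  apply h
  fin_cases i <;> simp

end fin

/-- STATEMENT 14: Let `(R,m)` be Cohen–Macaulay local of dimension `1 ≤ d ≤ 2` with
infinite residue field, `I, J` `m`-primary ideals, `F` a `ℤ²`-graded `(I,J)`-admissible
filtration with Hilbert coefficients `c`.  The following are equivalent:
(1) `e_{(d−1)e_i}(F) = 0` for `i = 1,2`;
(2) `I` and `J` are generated by systems of parameters (i.e. by `d` elements),
    `P_F(r,s) = H_F(r,s)` for all `(r,s) ∈ ℕ²`, and `F(r,s) = I^r J^s` for all
    `(r,s) ∈ ℤ²`;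
(3) `e_α(F) = 0` for all `|α| ≤ d−1`. -/
theorem coeff_vanishing_tfae_dim_le_two
    (R : Type*) [CommRing R] [IsLocalRing R] [IsNoetherianRing R]
    [Infinite (IsLocalRing.ResidueField R)]
    (d : ℕ) (hd1 : 1 ≤ d) (hd2 : d ≤ 2)
    (hdim : ringKrullDim R = d) (hCM : IsCMLocal R)
    (I J : Ideal R) (hI : IsMPrimary R I) (hJ : IsMPrimary R J)
    (F : AdmissibleFiltration R 2 ![I, J])
    (c : (Fin 2 → ℕ) → ℤ) (hc : IsHilbCoeffs F d c) :
    ((∀ i : Fin 2, c (fun j => if j = i then d - 1 else 0) = 0)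
      ↔ ((∃ f : Fin d → R, I = Ideal.span (Set.range f))
          ∧ (∃ g : Fin d → R, J = Ideal.span (Set.range g))
          ∧ (∀ n : Fin 2 → ℤ, 0 ≤ n → hilbPoly 2 d c n = hilbFn F n)
          ∧ (∀ n : Fin 2 → ℤ, F.F n = I ^ (n 0).toNat * J ^ (n 1).toNat)))
    ∧ (((∃ f : Fin d → R, I = Ideal.span (Set.range f))
          ∧ (∃ g : Fin d → R, J = Ideal.span (Set.range g))
          ∧ (∀ n : Fin 2 → ℤ, 0 ≤ n → hilbPoly 2 d c n = hilbFn F n)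
          ∧ (∀ n : Fin 2 → ℤ, F.F n = I ^ (n 0).toNat * J ^ (n 1).toNat))
      ↔ (∀ α : Fin 2 → ℕ, α 0 + α 1 ≤ d - 1 → c α = 0)) := by
  have h12 := step12 F d hd1 hd2 hdim hCM hI hJ c hc
  have h23 := step23 F d hd1 hd2 hdim hCM hI hJ c
  have h31 := step31 d c
  exact ⟨⟨h12, fun h => h31 (h23 h)⟩, ⟨h23, fun h => h12 (h31 h)⟩⟩
end

section
/- Let (R,m) be a Cohen–Macaulay local ring of dimension one with infinite residue field, I_1,…,I_s m-primary ideals, F = {F(n)}_{n∈ℤ^s} an I-admissible filtration of ideals in R, and A = {a_i∈I_i : i=1,…,s} a complete reduction of F. Then P(F) ⊆ ℕ^s and P(F) = R_A(F), i.e. the set of postulation vectors of F equals the set of reduction vectors of F with respect to A. In particular, the set R_A(F) is independent of the choice of complete reduction A of F. -/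
/-! Common definitions for multigraded filtrations of ideals
(following Sarkar–Verma, "Postulation and reduction vectors of
multigraded filtrations of ideals"). -/

open Finset IsLocalRing

section PostulationReduction

variable {R : Type*} [CommRing R] {s d : ℕ} {I : Fin s → Ideal R}

/-- The set `P(F)` of postulation vectors of `F` (w.r.t. the Hilbert coefficient data
`c` of its Hilbert polynomial): those `n ∈ ℤˢ` with `H_F(m) = P_F(m)` for all `m ≥ n`. -/
noncomputable def postSet (F : AdmissibleFiltration R s I) (d : ℕ)
    (c : (Fin s → ℕ) → ℤ) : Set (Fin s → ℤ) :=
  {n | ∀ m : Fin s → ℤ, n ≤ m → hilbFn F m = hilbPoly s d c m}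

/-- The set `R_A(F)` of reduction vectors of `F` with respect to a complete reduction
datum `x`: those `r ∈ ℕˢ` with `J·F(n) = F(n+e)` for all `n ≥ r`. -/
def redSet (F : AdmissibleFiltration R s I) (x : Fin s → Fin d → R) :
    Set (Fin s → ℤ) :=
  {r | 0 ≤ r ∧ ∀ n : Fin s → ℤ, r ≤ n → crIdeal x * F.F n = F.F (n + evec s)}

/-- The complete reduction number `r_A(F)`: the least `k ∈ ℕ` such that
`J·F(n) = F(n+e)` for all `n ≥ ke`. -/
noncomputable def crNumber (F : AdmissibleFiltration R s I) (x : Fin s → Fin d → R) : ℕ :=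
  sInf {k : ℕ | ∀ n : Fin s → ℤ, (∀ i, (k : ℤ) ≤ n i) →
    crIdeal x * F.F n = F.F (n + evec s)}

end PostulationReduction


section Helpers

variable {R : Type*} [CommRing R]

lemma lenI_quot (I : Ideal R) : lenI R (R ⧸ I) = ((Module.length R (R ⧸ I)).toNat : ℤ) := by
  unfold lenI
  rw [← Module.coe_length]
  rfl

lemma len_fin [IsLocalRing R] [IsNoetherianRing R] {I : Ideal R}
    (h : maximalIdeal R ≤ I.radical) : Module.length R (R ⧸ I) ≠ ⊤ := by
  have h0 : Ring.KrullDimLE 0 (R ⧸ I) := by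
    rw [Ideal.krullDimLE_zero_quotient_iff_forall_minimalPrimes_isMaximal]
    intro J hJ
    have hp : J.IsPrime := hJ.1.1
    have h1 : maximalIdeal R ≤ J := h.trans (hp.radical_le_iff.mpr hJ.1.2)
    have : maximalIdeal R = J := (maximalIdeal.isMaximal R).eq_of_le hp.ne_top h1
    rw [← this]
    exact maximalIdeal.isMaximal R
  have : IsArtinianRing (R ⧸ I) := IsNoetherianRing.isArtinianRing_of_krullDimLE_zero
  rw [Module.length_eq_of_surjective (S := R) (R := R ⧸ I) (M := R ⧸ I) Ideal.Quotient.mk_surjective]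
  exact Module.length_ne_top

lemma lenI_eq_iff [IsLocalRing R] [IsNoetherianRing R] {I K : Ideal R}
    (h : maximalIdeal R ≤ I.radical) (hIK : I ≤ K) :
    lenI R (R ⧸ K) = lenI R (R ⧸ I) ↔ I = K := by
  constructor
  · intro he
    by_contra hne
    have hlt := lt_of_le_of_ne hIK hne
    have hfI := len_fin h
    have hfK := len_fin (h.trans (Ideal.radical_mono hIK))
    rw [lenI_quot, lenI_quot] at he
    have he' : Module.length R (R ⧸ K) = Module.length R (R ⧸ I) := by
      rw [← ENat.natCast_toNat hfI, ← ENat.natCast_toNat hfK]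
      exact_mod_cast he
    have h2 := he'
    rw [Module.length_quotient, Module.length_quotient] at he'
    rw [Module.length_quotient] at hfK
    exact (Order.coheight_strictAnti hlt (lt_top_iff_ne_top.mpr hfK)).ne he'
  · rintro rfl; rfl

lemma len_mul (y : R) (hy : ∀ t, y * t = 0 → t = 0) (K : Ideal R) :
    Module.length R (R ⧸ (Ideal.span {y} * K)) =
      Module.length R (R ⧸ K) + Module.length R (R ⧸ Ideal.span {y}) := by
  have h1 : K ≤ Submodule.comap (LinearMap.mulLeft R y) (Ideal.span {y} * K) := by
    intro t ht
    exact Ideal.mul_mem_mul (Ideal.mem_span_singleton_self y) ht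
  have h2 : Ideal.span {y} * K ≤ Submodule.comap (LinearMap.id : R →ₗ[R] R) (Ideal.span {y}) :=
    Ideal.mul_le_left
  refine Module.length_eq_add_of_exact (Submodule.mapQ K (Ideal.span {y} * K) (LinearMap.mulLeft R y) h1)
    (Submodule.mapQ (Ideal.span {y} * K) (Ideal.span {y}) LinearMap.id h2) ?_ ?_ ?_
  · rw [← LinearMap.ker_eq_bot, LinearMap.ker_eq_bot']
    intro m hm
    obtain ⟨t, rfl⟩ := Submodule.Quotient.mk_surjective _ m
    rw [Submodule.mapQ_apply, Submodule.Quotient.mk_eq_zero, LinearMap.mulLeft_apply,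
      Ideal.mem_span_singleton_mul] at hm
    obtain ⟨z, hz, hzt⟩ := hm
    rw [Submodule.Quotient.mk_eq_zero]
    have : z - t = 0 := hy _ (by rw [mul_sub, hzt, sub_self])
    rwa [← sub_eq_zero.mp this]
  · intro m
    obtain ⟨t, rfl⟩ := Submodule.Quotient.mk_surjective _ m
    exact ⟨Submodule.Quotient.mk t, rfl⟩
  · intro m
    obtain ⟨t, rfl⟩ := Submodule.Quotient.mk_surjective _ m
    rw [Submodule.mapQ_apply, Submodule.Quotient.mk_eq_zero, LinearMap.id_apply]
    constructor
    · intro ht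
      obtain ⟨z, hz⟩ := Ideal.mem_span_singleton'.mp ht
      refine ⟨Submodule.Quotient.mk z, ?_⟩
      rw [Submodule.mapQ_apply, LinearMap.mulLeft_apply, mul_comm y z, hz]
    · rintro ⟨q, hq⟩
      obtain ⟨z, rfl⟩ := Submodule.Quotient.mk_surjective _ q
      rw [Submodule.mapQ_apply, LinearMap.mulLeft_apply, Submodule.Quotient.eq] at hq
      have h3 := h2 hq
      have h4 : y * z ∈ Ideal.span {y} := Ideal.mul_mem_right _ _ (Ideal.mem_span_singleton_self y)
      have h5 := Ideal.sub_mem _ h4 h3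
      simpa using h5

lemma rad_mul [IsLocalRing R] {I K : Ideal R} (h : maximalIdeal R ≤ I.radical)
    (h' : maximalIdeal R ≤ K.radical) : maximalIdeal R ≤ (I * K).radical := by
  rw [Ideal.radical_mul]; exact le_inf h h'

lemma rad_pow [IsLocalRing R] {I : Ideal R} (h : maximalIdeal R ≤ I.radical) (k : ℕ) :
    maximalIdeal R ≤ (I ^ k).radical := by
  induction k with
  | zero => rw [pow_zero]; rw [Ideal.one_eq_top]; exact le_top.trans Ideal.le_radical
  | succ k ih => rw [pow_succ]; exact rad_mul ih h

lemma rad_prodPow [IsLocalRing R] {s : ℕ} {I : Fin s → Ideal R} (hI : ∀ i, IsMPrimary R (I i))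
    (n : Fin s → ℤ) : maximalIdeal R ≤ (prodPow I n).radical := by
  unfold prodPow
  refine Finset.prod_induction _ (fun K : Ideal R => maximalIdeal R ≤ K.radical)
    (fun _ _ => rad_mul) (by rw [Ideal.one_eq_top]; exact le_top.trans Ideal.le_radical) (fun i _ => rad_pow (hI i).2 _)

lemma rad_F [IsLocalRing R] {s : ℕ} {I : Fin s → Ideal R} (hI : ∀ i, IsMPrimary R (I i))
    (F : AdmissibleFiltration R s I) (n : Fin s → ℤ) : maximalIdeal R ≤ (F.F n).radical :=
  (rad_prodPow hI n).trans (Ideal.radical_mono (F.prodPow_le n))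

lemma crIdeal_eq {s : ℕ} (x : Fin s → Fin 1 → R) : crIdeal x = Ideal.span {∏ i, x i 0} := by
  unfold crIdeal
  congr 1
  ext t
  simp [eq_comm]

lemma crIdeal_le {s : ℕ} {I : Fin s → Ideal R} (F : AdmissibleFiltration R s I)
    (x : Fin s → Fin 1 → R) (hx : ∀ i j, x i j ∈ I i) : crIdeal x ≤ F.F (evec s) := by
  rw [crIdeal_eq, Ideal.span_singleton_le_iff_mem]
  apply F.prodPow_le
  unfold prodPow evec
  simpa using Ideal.prod_mem_prod (s := Finset.univ) (fun i _ => hx i 0)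

lemma exists_reg [IsLocalRing R] (hdim : ringKrullDim R = 1) (hCM : IsCMLocal R) :
    ∃ z ∈ maximalIdeal R, ∀ t, z * t = 0 → t = 0 := by
  obtain ⟨rs, hm, hreg, hlen⟩ := hCM
  rw [hdim] at hlen
  match rs, hm, hreg, hlen with
  | [], _, _, hlen => simp at hlen
  | z :: rs, hm, hreg, _ =>
    refine ⟨z, hm z (by simp), fun t ht => ?_⟩
    have h := ((RingTheory.Sequence.isRegular_cons_iff R z rs).mp hreg).1
    exact h (by simpa using ht)

lemma cr_reg [IsLocalRing R] (hdim : ringKrullDim R = 1) (hCM : IsCMLocal R) (y : R)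
    (h : maximalIdeal R ≤ (Ideal.span {y}).radical) : ∀ t, y * t = 0 → t = 0 := by
  obtain ⟨z, hz, hzr⟩ := exists_reg hdim hCM
  obtain ⟨k, hk⟩ := h hz
  obtain ⟨b, hb⟩ := Ideal.mem_span_singleton'.mp hk
  intro t ht
  have h1 : z ^ k * t = 0 := by rw [← hb, mul_assoc, ht, mul_zero]
  clear hk hb
  induction k with
  | zero => simpa using h1
  | succ k ih => exact ih (hzr _ (by rw [← h1]; ring))

lemma key [IsLocalRing R] [IsNoetherianRing R] (hdim : ringKrullDim R = 1) (hCM : IsCMLocal R)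
    {s : ℕ} {I : Fin s → Ideal R} (hI : ∀ i, IsMPrimary R (I i))
    (F : AdmissibleFiltration R s I) (x : Fin s → Fin 1 → R) (hx : IsCompleteReduction F x) :
    ∃ l : ℤ, ∀ n, (hilbFn F (n + evec s) = hilbFn F n + l ↔
      crIdeal x * F.F n = F.F (n + evec s)) := by
  obtain ⟨hxI, N, hN⟩ := hx
  have hrad : maximalIdeal R ≤ (crIdeal x).radical := by
    have h := rad_F hI F ((fun _ => (N : ℤ)) + evec s)
    rw [← hN _ (fun _ => le_rfl)] at h
    exact h.trans (Ideal.radical_mono Ideal.mul_le_left)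
  have hle := crIdeal_le F x hxI
  have hfin := len_fin hrad
  have hreg := cr_reg hdim hCM (∏ i, x i 0) (by rw [← crIdeal_eq]; exact hrad)
  refine ⟨lenI R (R ⧸ crIdeal x), fun n => ?_⟩
  have hr := rad_mul hrad (rad_F hI F n)
  have hsub : crIdeal x * F.F n ≤ F.F (n + evec s) := by
    rw [add_comm]
    exact (Ideal.mul_mono_left hle).trans (F.mul_le _ _)
  rw [← lenI_eq_iff hr hsub]
  have : lenI R (R ⧸ (crIdeal x * F.F n)) = hilbFn F n + lenI R (R ⧸ crIdeal x) := by
    unfold hilbFn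
    rw [lenI_quot, lenI_quot, lenI_quot]
    have h1 := len_mul _ hreg (F.F n)
    rw [← crIdeal_eq] at h1
    rw [h1, ENat.toNat_add (len_fin (rad_F hI F n)) hfin]
    push_cast
    rfl
  rw [this]
  rfl

lemma hilbPoly_aff (s : ℕ) (c : (Fin s → ℕ) → ℤ) :
    ∃ (a : ℤ) (v : Fin s → ℤ), ∀ n, hilbPoly s 1 c n = a + ∑ i, v i * n i := by
  classical
  have hterm : ∀ α ∈ Finset.univ.filter (fun α : Fin s → Fin (1+1) => (∑ i, (α i : ℕ)) ≤ 1),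
      ∃ (a : ℤ) (v : Fin s → ℤ), ∀ n : Fin s → ℤ, (-1)^(1 - ∑ i, (α i : ℕ)) *
        c (fun i => (α i : ℕ)) * ∏ i, Ring.choose (n i + ((α i : ℕ) : ℤ) - 1) (α i : ℕ)
        = a + ∑ i, v i * n i := by
    intro α hα
    have hα' : (∑ i, (α i : ℕ)) ≤ 1 := (Finset.mem_filter.mp hα).2
    by_cases h0 : ∀ i, (α i : ℕ) = 0
    · refine ⟨(-1)^(1 - ∑ i, (α i : ℕ)) * c (fun i => (α i : ℕ)), 0, fun n => ?_⟩
      simp [h0]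
    · push Not at h0
      obtain ⟨j, hj⟩ := h0
      have hj1 : (α j : ℕ) = 1 := by have := (α j).2; omega
      have hr : ∀ i, i ≠ j → (α i : ℕ) = 0 := by
        intro i hi
        have h3 := Finset.add_le_sum (s := Finset.univ) (f := fun i => (α i : ℕ))
          (fun _ _ => Nat.zero_le _) (Finset.mem_univ i) (Finset.mem_univ j) hi
        omega
      refine ⟨0, Pi.single j ((-1)^(1 - ∑ i, (α i : ℕ)) * c (fun i => (α i : ℕ))), fun n => ?_⟩
      rw [Finset.prod_eq_single j (fun i _ hi => by rw [hr i hi, Ring.choose_zero_right])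
          (by simp),
        Finset.sum_eq_single (f := fun i => (Pi.single j ((-1)^(1 - ∑ i, (α i : ℕ)) *
          c (fun i => (α i : ℕ))) : Fin s → ℤ) i * n i) j
          (fun i _ hi => by simp [hi]) (by simp), Pi.single_eq_same, hj1]
      simp
  choose! a v hav using hterm
  refine ⟨∑ α ∈ Finset.univ.filter (fun α : Fin s → Fin (1+1) => (∑ i, (α i : ℕ)) ≤ 1), a α,
    fun i => ∑ α ∈ Finset.univ.filter (fun α : Fin s → Fin (1+1) => (∑ i, (α i : ℕ)) ≤ 1), v α i,
    fun n => ?_⟩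
  unfold hilbPoly
  rw [Finset.sum_congr rfl (fun α hα => hav α hα n), Finset.sum_add_distrib, Finset.sum_comm]
  simp only [Finset.sum_mul]

lemma post_nonneg [IsLocalRing R] [IsNoetherianRing R] (hdim : ringKrullDim R = 1)
    {s : ℕ} {I : Fin s → Ideal R} (hI : ∀ i, IsMPrimary R (I i))
    (F : AdmissibleFiltration R s I) (c : (Fin s → ℕ) → ℤ) (hc : IsHilbCoeffs F 1 c) :
    postSet F 1 c ⊆ {n | 0 ≤ n} := by
  intro n hn
  by_contra hneg
  simp only [Set.mem_ofPred_eq, Pi.le_def, Pi.zero_apply, not_forall, not_le] at hneg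
  obtain ⟨i, hi⟩ := hneg
  obtain ⟨a, v, hav⟩ := hilbPoly_aff s c
  have hstep : ∀ m : Fin s → ℤ, hilbPoly s 1 c (m + Pi.single i 1) = hilbPoly s 1 c m + v i := by
    intro m
    rw [hav, hav]
    simp only [Pi.add_apply, mul_add, Finset.sum_add_distrib]
    rw [Finset.sum_eq_single (f := fun j => v j * (Pi.single i 1 : Fin s → ℤ) j) i
      (fun j _ hj => by simp [hj]) (by simp), Pi.single_eq_same]
    ring
  have hv : v i = 0 := by
    let m : Fin s → ℤ := Function.update n i (-1)
    have hnm : n ≤ m := by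
      intro j
      by_cases hj : j = i
      · subst hj; simp [m]; omega
      · simp [m, hj]
    have hs : (0 : Fin s → ℤ) ≤ Pi.single i 1 := by
      intro j
      by_cases hj : j = i
      · subst hj; simp
      · simp [hj]
    have h1 := hn m hnm
    have h2 := hn (m + Pi.single i 1) (hnm.trans (le_add_of_nonneg_right hs))
    have h3 : vplus m = vplus (m + Pi.single i 1) := by
      ext j
      by_cases hj : j = i
      · subst hj; simp [vplus, m]
      · simp [vplus, m, hj]
    have h4 : hilbFn F m = hilbFn F (m + Pi.single i 1) := by
      unfold hilbFn
      rw [F.plus_eq m, h3, ← F.plus_eq]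
    rw [hstep] at h2
    omega
  obtain ⟨N, hN⟩ := hc
  obtain ⟨M, hM0, hM⟩ := F.admissible
  let q : Fin s → ℤ := fun _ => (N : ℤ)
  have hq0 : 0 ≤ q := fun _ => by simp [q]
  have hs : (0 : Fin s → ℤ) ≤ Pi.single i 1 := by
    intro j
    by_cases hj : j = i
    · subst hj; simp
    · simp [hj]
  have hp : ∀ j, (N : ℤ) ≤ (q + M) j := fun j => by
    have := hM0 j
    simp [q] at this ⊢; exact this
  have hp' : ∀ j, (N : ℤ) ≤ (q + M + Pi.single i 1 : Fin s → ℤ) j := fun j =>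
    (hp j).trans (by have := hs j; simpa using this)
  have he : hilbFn F (q + M) = hilbFn F (q + M + Pi.single i 1) := by
    rw [← hN _ hp, ← hN _ hp', hstep, hv, add_zero]
  have heq := (lenI_eq_iff (rad_F hI F (q + M + Pi.single i 1))
    (F.antitone (q + M) _ (le_add_of_nonneg_right hs))).mp he
  have h5 : F.F (q + M + Pi.single i 1) = prodPow I (Pi.single i 1) * F.F (q + M) := by
    have h6 : q + M + Pi.single i 1 = (Pi.single i 1 + q) + M := by abel
    rw [h6, hM _ (add_nonneg hs hq0), hM _ hq0, ← mul_assoc]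
    congr 1
    unfold prodPow
    rw [← Finset.prod_mul_distrib]
    refine Finset.prod_congr rfl fun j _ => ?_
    rw [← pow_add, ← Int.toNat_add (hs j) (hq0 j)]
    rfl
  have h7 : prodPow I (Pi.single i 1) ≤ maximalIdeal R := by
    refine Ideal.prod_le_inf.trans ((Finset.inf_le (Finset.mem_univ i)).trans ?_)
    simpa using IsLocalRing.le_maximalIdeal (hI i).1
  have hbot : F.F (q + M) = ⊥ := by
    refine Submodule.eq_bot_of_le_smul_of_le_jacobson_bot (maximalIdeal R) _
      (IsNoetherian.noetherian _) ?_ ?_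
    · calc F.F (q + M) = prodPow I (Pi.single i 1) * F.F (q + M) := by rw [← h5, heq]
        _ ≤ maximalIdeal R * F.F (q + M) := Ideal.mul_mono_left h7
    · rw [IsLocalRing.jacobson_eq_maximalIdeal _ bot_ne_top]
  have hr := rad_F hI F (q + M)
  rw [hbot] at hr
  have hK : Ring.KrullDimLE 0 R := by
    refine Ring.KrullDimLE.mk₀ fun J hJ => ?_
    have h8 : maximalIdeal R ≤ J := hr.trans (hJ.radical_le_iff.mpr bot_le)
    rw [← (maximalIdeal.isMaximal R).eq_of_le hJ.ne_top h8]
    exact maximalIdeal.isMaximal R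
  rw [ringKrullDimZero_iff_ringKrullDim_eq_zero, hdim] at hK
  exact one_ne_zero hK

lemma post_eq_red [IsLocalRing R] [IsNoetherianRing R] (hdim : ringKrullDim R = 1)
    (hCM : IsCMLocal R)
    {s : ℕ} {I : Fin s → Ideal R} (hI : ∀ i, IsMPrimary R (I i))
    (F : AdmissibleFiltration R s I) (c : (Fin s → ℕ) → ℤ) (hc : IsHilbCoeffs F 1 c)
    (x : Fin s → Fin 1 → R) (hx : IsCompleteReduction F x) :
    postSet F 1 c = redSet F x := by
  obtain ⟨l, hl⟩ := key hdim hCM hI F x hx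
  obtain ⟨a, v, hav⟩ := hilbPoly_aff s c
  have hstep0 : ∀ m : Fin s → ℤ, hilbPoly s 1 c (m + evec s) = hilbPoly s 1 c m + ∑ i, v i := by
    intro m
    rw [hav, hav]
    simp only [Pi.add_apply, mul_add, Finset.sum_add_distrib, evec, mul_one]
    ring
  have hnn : (0 : Fin s → ℤ) ≤ evec s := fun _ => by simp [evec]
  have hvl : ∑ i, v i = l := by
    obtain ⟨N, hN⟩ := hc
    obtain ⟨_, N', hN'⟩ := hx
    let q : Fin s → ℤ := fun _ => max (N : ℤ) N'
    have h1 := (hl q).mpr (hN' q fun _ => le_max_right _ _)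
    rw [← hN q fun _ => le_max_left _ _, ← hN (q + evec s) fun i =>
      (le_max_left (N : ℤ) N').trans (by have := hnn i; simpa [q] using this), hstep0] at h1
    exact add_left_cancel h1
  rw [hvl] at hstep0
  ext r
  constructor
  · intro hr
    refine ⟨post_nonneg hdim hI F c hc hr, fun n hn => ?_⟩
    rw [← hl, hr n hn, hr _ (hn.trans (le_add_of_nonneg_right hnn)), hstep0]
  · rintro ⟨hr0, hr⟩ m hm
    have hall : ∀ k : ℕ, hilbFn F (m + k • evec s) - hilbPoly s 1 c (m + k • evec s) =
        hilbFn F m - hilbPoly s 1 c m := by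
      intro k
      induction k with
      | zero => simp
      | succ k ih =>
        have h1 := (hl (m + k • evec s)).mpr (hr _ (hm.trans
          (le_add_of_nonneg_right (nsmul_nonneg hnn k))))
        rw [← ih, succ_nsmul, ← add_assoc, h1, hstep0]
        ring
    obtain ⟨N, hN⟩ := hc
    have h2 := hall N
    rw [hN _ (fun i => by
      have h3 : 0 ≤ r i := hr0 i
      have h4 : r i ≤ m i := hm i
      simp [evec]
      omega)] at h2
    omega

end Helpers

/-- STATEMENT 15: Let `(R,m)` be Cohen–Macaulay local of dimension one with infinite
residue field, `I₁,…,I_s` `m`-primary, `F` an `I`-admissible filtration, and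
`A = {a_i ∈ I_i}` a complete reduction of `F` (`d = 1`, so `A` is a single column).
Then `P(F) ⊆ ℕˢ` and `P(F) = R_A(F)`; in particular `R_A(F)` is independent of the
choice of complete reduction `A`. -/
theorem postulation_eq_reduction_dim_one
    (R : Type*) [CommRing R] [IsLocalRing R] [IsNoetherianRing R]
    [Infinite (IsLocalRing.ResidueField R)]
    (s : ℕ) (hdim : ringKrullDim R = 1) (hCM : IsCMLocal R)
    (I : Fin s → Ideal R) (hI : ∀ i, IsMPrimary R (I i))
    (F : AdmissibleFiltration R s I)
    (c : (Fin s → ℕ) → ℤ) (hc : IsHilbCoeffs F 1 c)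
    (x : Fin s → Fin 1 → R) (hx : IsCompleteReduction F x) :
    postSet F 1 c ⊆ {n | 0 ≤ n}
    ∧ postSet F 1 c = redSet F x
    ∧ (∀ x' : Fin s → Fin 1 → R, IsCompleteReduction F x' →
        redSet F x = redSet F x') := by
  exact ⟨post_nonneg hdim hI F c hc, post_eq_red hdim hCM hI F c hc x hx, fun x' hx' =>
    (post_eq_red hdim hCM hI F c hc x hx).symm.trans (post_eq_red hdim hCM hI F c hc x' hx')⟩
end

section
/- Let (R,m) be a one-dimensional Cohen–Macaulay local ring with infinite residue field, I_1,…,I_s m-primary ideals, and F = {F(n)}_{n∈ℤ^s} an I-admissible filtration of ideals in R. Then the complete reduction number of F with respect to a complete reduction is independent of the choice of complete reduction: if A and A' are complete reductions of F, then r_A(F) = r_{A'}(F). -/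
/-! Common definitions for multigraded filtrations of ideals
(following Sarkar–Verma, "Postulation and reduction vectors of
multigraded filtrations of ideals"). -/

open Finset IsLocalRing

lemma aux_cancel {R : Type*} [CommRing R] {y : R} (hy : y ∈ nonZeroDivisors R) {A B : Ideal R}
    (h : Ideal.span {y} * A ≤ Ideal.span {y} * B) : A ≤ B := by
  intro a ha
  have h1 : y * a ∈ Ideal.span {y} * B :=
    h (Ideal.mul_mem_mul (Ideal.mem_span_singleton_self y) ha)
  obtain ⟨b, hb, hab⟩ := Ideal.mem_span_singleton_mul.1 h1
  have : b = a := (mul_cancel_left_mem_nonZeroDivisors hy).1 hab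
  exact this ▸ hb

lemma aux_crIdeal {R : Type*} [CommRing R] {s : ℕ} (x : Fin s → Fin 1 → R) :
    crIdeal x = Ideal.span {∏ i, x i 0} := by
  unfold crIdeal
  rw [Set.range_unique]
  rfl

lemma aux_exists_reg {R : Type*} [CommRing R] [IsLocalRing R]
    (hdim : ringKrullDim R = 1) (hCM : IsCMLocal R) :
    ∃ t ∈ maximalIdeal R, t ∈ nonZeroDivisors R := by
  obtain ⟨rs, hm, hreg, hlen⟩ := hCM
  rw [hdim] at hlen
  cases rs with
  | nil => simp at hlen
  | cons t l =>
    refine ⟨t, hm t (by simp), ?_⟩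
    have h := ((RingTheory.Sequence.isWeaklyRegular_cons_iff R t l).1 hreg.toIsWeaklyRegular).1
    rw [mem_nonZeroDivisors_iff_right]
    intro z hz
    apply h
    simp only [smul_eq_mul, mul_zero]
    rw [mul_comm]; exact hz

lemma aux_y_reg {R : Type*} [CommRing R] [IsLocalRing R]
    (s : ℕ) (hdim : ringKrullDim R = 1) (hCM : IsCMLocal R)
    (I : Fin s → Ideal R) (hI : ∀ i, IsMPrimary R (I i))
    (F : AdmissibleFiltration R s I) (x : Fin s → Fin 1 → R)
    (hx : IsCompleteReduction F x) : (∏ i, x i 0) ∈ nonZeroDivisors R := by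
  obtain ⟨t, htm, ht⟩ := aux_exists_reg hdim hCM
  obtain ⟨-, N, hN⟩ := hx
  have h1 := hN (fun _ => (N : ℤ)) (fun _ => le_rfl)
  have hk : ∀ i, ∃ k : ℕ, t ^ k ∈ I i := fun i => (hI i).2 htm
  choose k hk using hk
  set v : Fin s → ℤ := (fun _ => (N : ℤ)) + evec s with hv
  have h2 : (∏ i, (t ^ k i) ^ (v i).toNat) ∈ F.F v := by
    apply F.prodPow_le
    exact Ideal.prod_mem_prod fun i _ => Ideal.pow_mem_pow (hk i) _
  rw [← h1, aux_crIdeal] at h2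
  obtain ⟨z, -, hz⟩ := Ideal.mem_span_singleton_mul.1 h2
  have h3 : (∏ i, (t ^ k i) ^ (v i).toNat) ∈ nonZeroDivisors R :=
    prod_mem fun i _ => pow_mem (pow_mem ht _) _
  rw [← hz] at h3
  exact (mul_mem_nonZeroDivisors.1 h3).1

lemma aux_transfer {R : Type*} [CommRing R] {s : ℕ} {I : Fin s → Ideal R}
    (F : AdmissibleFiltration R s I) (x x' : Fin s → Fin 1 → R)
    (hy : (∏ i, x i 0) ∈ nonZeroDivisors R)
    (hx' : IsCompleteReduction F x') (k : ℕ)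
    (h : ∀ n : Fin s → ℤ, (∀ i, (k : ℤ) ≤ n i) → crIdeal x * F.F n = F.F (n + evec s)) :
    ∀ n : Fin s → ℤ, (∀ i, (k : ℤ) ≤ n i) → crIdeal x' * F.F n = F.F (n + evec s) := by
  intro n hn
  obtain ⟨-, N, hN⟩ := hx'
  have hp : ∀ j : ℕ, crIdeal x ^ j * F.F n = F.F (n + j • evec s) := by
    intro j
    induction j with
    | zero => simp
    | succ j ih =>
      rw [pow_succ', mul_assoc, ih, h, succ_nsmul, add_assoc]
      intro i
      have := hn i
      simp [evec]
      omega
  have h1 := hN (n + N • evec s) (by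
    intro i
    have := hn i
    simp [evec]
    omega)
  have h2 : n + N • evec s + evec s = n + (N + 1) • evec s := by
    rw [succ_nsmul, add_assoc]
  rw [h2, ← hp, ← hp, pow_succ, mul_assoc, h n hn, mul_left_comm, aux_crIdeal x,
    Ideal.span_singleton_pow] at h1
  exact le_antisymm (aux_cancel (pow_mem hy N) h1.le) (aux_cancel (pow_mem hy N) h1.ge)

/-- STATEMENT 16: Let `(R,m)` be a one-dimensional Cohen–Macaulay local ring with
infinite residue field, `I₁,…,I_s` `m`-primary, `F` an `I`-admissible filtration.
Then the complete reduction number of `F` is independent of the choice of complete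
reduction: `r_A(F) = r_{A'}(F)` for any two complete reductions `A, A'` of `F`. -/
theorem complete_reduction_number_independent_dim_one
    (R : Type*) [CommRing R] [IsLocalRing R] [IsNoetherianRing R]
    [Infinite (IsLocalRing.ResidueField R)]
    (s : ℕ) (hdim : ringKrullDim R = 1) (hCM : IsCMLocal R)
    (I : Fin s → Ideal R) (hI : ∀ i, IsMPrimary R (I i))
    (F : AdmissibleFiltration R s I)
    (x x' : Fin s → Fin 1 → R)
    (hx : IsCompleteReduction F x) (hx' : IsCompleteReduction F x') :
    crNumber F x = crNumber F x' := by
  have hy := aux_y_reg s hdim hCM I hI F x hx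
  have hy' := aux_y_reg s hdim hCM I hI F x' hx'
  unfold crNumber
  congr 1
  ext k
  exact ⟨aux_transfer F x x' hy hx' k, aux_transfer F x' x hy' hx k⟩
end
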